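/- arXiv:2505.00241 — 3 statements merged into one kernel-verified Lean document; each statement's English description precedes it below -/
import Mathlib

section
/- Let c ∈ k with c² = −12 (i.e. c = ±2√3·i), and let b ∈ k with b ∉ {2, −2}. Then Iso(b,c) holds (i.e. H_b is isomorphic to H_{2√3 i}) if and only if b = c or b = −c. -/
/-!
Homogenise `f_a` to the binary decic `F_a = x⁹y + a x⁷y³ - a x³y⁷ - x y⁹`. The quadratic invariant
of binary decics, the tenth transvectant `(F, F)₁₀ = ∑ (-1)ⁱ cᵢ c₁₀₋ᵢ / binom(10, i)`, takes on
`F_a` a value proportional to `a² + 12`. An isomorphism `H_b ≅ H_c` multiplies it by a nonzero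
factor, so `c² = -12` forces `b² = -12 = c²`, i.e. `b = ±c`. Conversely `X ↦ iX` carries `f_c`
to `i f_{-c}`.

The denominators `binom(10, i)` for `i = 4, 5, 6` vanish in characteristic `7`. This is harmless:
`F_a` has no monomial `xⁱy¹⁰⁻ⁱ` with `i = 4, 5, 6`, and after any linear substitution the
coefficients of these monomials are `7` times integral polynomials (`d4`, `d5`, `d6` below). Clearing
denominators therefore gives an identity over `ℤ` (`invariant_identity`) valid in every
characteristic, in which each of the middle terms contains a factor `7 dᵢ`.
-/

open Polynomial

/-- The polynomial `f_a = X (X⁴ − 1)(X⁴ + a X² + 1)` over a field `k`. -/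
noncomputable def f {k : Type*} [Field k] (a : k) : k[X] :=
  X * (X ^ 4 - 1) * (X ^ 4 + C a * X ^ 2 + 1)

/-- `Iso b a` : the hyperelliptic curve `H_b : y² = f_b(x)` is isomorphic to `H_a : y² = f_a(x)`,
expressed by the existence of a fractional-linear substitution carrying `f_a` to `λ² f_b`. -/
def Iso {k : Type*} [Field k] (b a : k) : Prop :=
  ∃ α β γ δ lam : k, α * δ - β * γ ≠ 0 ∧ lam ≠ 0 ∧
    C (lam ^ 2) * f b =
      ∑ j ∈ Finset.range 10,
        C ((f a).coeff j) * (C α * X + C β) ^ j * (C γ * X + C δ) ^ (10 - j)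

lemma f_expand {k : Type*} [Field k] (a : k) :
    f a = X ^ 9 + C a * X ^ 7 - C a * X ^ 3 - X := by
  unfold f; ring

/-- The substituted form, with the coefficients of `f a` evaluated. -/
lemma subst_sum {k : Type*} [Field k] (a : k) (U V : k[X]) :
    ∑ j ∈ Finset.range 10, C ((f a).coeff j) * U ^ j * V ^ (10 - j)
      = U ^ 9 * V + C a * U ^ 7 * V ^ 3 - C a * U ^ 3 * V ^ 7 - U * V ^ 9 := by
  rw [f_expand]
  simp [Finset.sum_range_succ, coeff_X, coeff_X_pow, coeff_C_mul]
  ring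

section Coefficients

variable {R : Type*} [CommRing R] (a α β γ δ : R)

/-- The coefficient of `X ^ 0` in `F_a(αX + β, γX + δ)`. -/
def e0 : R :=
    -β * δ ^ 9 - a * β ^ 3 * δ ^ 7 + a * β ^ 7 * δ ^ 3 + β ^ 9 * δ

/-- The coefficient of `X ^ 1` in `F_a(αX + β, γX + δ)`. -/
def e1 : R :=
    -9 * β * γ * δ ^ 8 - α * δ ^ 9 - 7 * a * β ^ 3 * γ * δ ^ 6 - 3 * a * α * β ^ 2 * δ ^ 7 +
      3 * a * β ^ 7 * γ * δ ^ 2 + 7 * a * α * β ^ 6 * δ ^ 3 + β ^ 9 * γ + 9 * α * β ^ 8 * δ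

/-- The coefficient of `X ^ 2` in `F_a(αX + β, γX + δ)`. -/
def e2 : R :=
    -36 * β * γ ^ 2 * δ ^ 7 - 9 * α * γ * δ ^ 8 - 21 * a * β ^ 3 * γ ^ 2 * δ ^ 5 - 21 * a *
      α * β ^ 2 * γ * δ ^ 6 - 3 * a * α ^ 2 * β * δ ^ 7 + 3 * a * β ^ 7 * γ ^ 2 * δ + 21 * a
      * α * β ^ 6 * γ * δ ^ 2 + 21 * a * α ^ 2 * β ^ 5 * δ ^ 3 + 9 * α * β ^ 8 * γ + 36 * α
      ^ 2 * β ^ 7 * δ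

/-- The coefficient of `X ^ 3` in `F_a(αX + β, γX + δ)`. -/
def e3 : R :=
    -84 * β * γ ^ 3 * δ ^ 6 - 36 * α * γ ^ 2 * δ ^ 7 - 35 * a * β ^ 3 * γ ^ 3 * δ ^ 4 - 63 *
      a * α * β ^ 2 * γ ^ 2 * δ ^ 5 - 21 * a * α ^ 2 * β * γ * δ ^ 6 - a * α ^ 3 * δ ^ 7 + a
      * β ^ 7 * γ ^ 3 + 21 * a * α * β ^ 6 * γ ^ 2 * δ + 63 * a * α ^ 2 * β ^ 5 * γ * δ ^ 2
      + 35 * a * α ^ 3 * β ^ 4 * δ ^ 3 + 36 * α ^ 2 * β ^ 7 * γ + 84 * α ^ 3 * β ^ 6 * δ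

/-- One seventh of the coefficient of `X ^ 4` in `F_a(αX + β, γX + δ)`. -/
def d4 : R :=
    -18 * β * γ ^ 4 * δ ^ 5 - 12 * α * γ ^ 3 * δ ^ 6 - 5 * a * β ^ 3 * γ ^ 4 * δ ^ 3 - 15 *
      a * α * β ^ 2 * γ ^ 3 * δ ^ 4 - 9 * a * α ^ 2 * β * γ ^ 2 * δ ^ 5 - a * α ^ 3 * γ * δ
      ^ 6 + a * α * β ^ 6 * γ ^ 3 + 9 * a * α ^ 2 * β ^ 5 * γ ^ 2 * δ + 15 * a * α ^ 3 * β ^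
      4 * γ * δ ^ 2 + 5 * a * α ^ 4 * β ^ 3 * δ ^ 3 + 12 * α ^ 3 * β ^ 6 * γ + 18 * α ^ 4 *
      β ^ 5 * δ

/-- One seventh of the coefficient of `X ^ 5` in `F_a(αX + β, γX + δ)`. -/
def d5 : R :=
    -18 * β * γ ^ 5 * δ ^ 4 - 18 * α * γ ^ 4 * δ ^ 5 - 3 * a * β ^ 3 * γ ^ 5 * δ ^ 2 - 15 *
      a * α * β ^ 2 * γ ^ 4 * δ ^ 3 - 15 * a * α ^ 2 * β * γ ^ 3 * δ ^ 4 - 3 * a * α ^ 3 * γ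
      ^ 2 * δ ^ 5 + 3 * a * α ^ 2 * β ^ 5 * γ ^ 3 + 15 * a * α ^ 3 * β ^ 4 * γ ^ 2 * δ + 15
      * a * α ^ 4 * β ^ 3 * γ * δ ^ 2 + 3 * a * α ^ 5 * β ^ 2 * δ ^ 3 + 18 * α ^ 4 * β ^ 5 *
      γ + 18 * α ^ 5 * β ^ 4 * δ

/-- One seventh of the coefficient of `X ^ 6` in `F_a(αX + β, γX + δ)`. -/
def d6 : R :=
    -12 * β * γ ^ 6 * δ ^ 3 - 18 * α * γ ^ 5 * δ ^ 4 - a * β ^ 3 * γ ^ 6 * δ - 9 * a * α * β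
      ^ 2 * γ ^ 5 * δ ^ 2 - 15 * a * α ^ 2 * β * γ ^ 4 * δ ^ 3 - 5 * a * α ^ 3 * γ ^ 3 * δ ^
      4 + 5 * a * α ^ 3 * β ^ 4 * γ ^ 3 + 15 * a * α ^ 4 * β ^ 3 * γ ^ 2 * δ + 9 * a * α ^ 5
      * β ^ 2 * γ * δ ^ 2 + a * α ^ 6 * β * δ ^ 3 + 18 * α ^ 5 * β ^ 4 * γ + 12 * α ^ 6 * β
      ^ 3 * δ

/-- The coefficient of `X ^ 7` in `F_a(αX + β, γX + δ)`. -/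
def e7 : R :=
    -36 * β * γ ^ 7 * δ ^ 2 - 84 * α * γ ^ 6 * δ ^ 3 - a * β ^ 3 * γ ^ 7 - 21 * a * α * β ^
      2 * γ ^ 6 * δ - 63 * a * α ^ 2 * β * γ ^ 5 * δ ^ 2 - 35 * a * α ^ 3 * γ ^ 4 * δ ^ 3 +
      35 * a * α ^ 4 * β ^ 3 * γ ^ 3 + 63 * a * α ^ 5 * β ^ 2 * γ ^ 2 * δ + 21 * a * α ^ 6 *
      β * γ * δ ^ 2 + a * α ^ 7 * δ ^ 3 + 84 * α ^ 6 * β ^ 3 * γ + 36 * α ^ 7 * β ^ 2 * δ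

/-- The coefficient of `X ^ 8` in `F_a(αX + β, γX + δ)`. -/
def e8 : R :=
    -9 * β * γ ^ 8 * δ - 36 * α * γ ^ 7 * δ ^ 2 - 3 * a * α * β ^ 2 * γ ^ 7 - 21 * a * α ^ 2
      * β * γ ^ 6 * δ - 21 * a * α ^ 3 * γ ^ 5 * δ ^ 2 + 21 * a * α ^ 5 * β ^ 2 * γ ^ 3 + 21
      * a * α ^ 6 * β * γ ^ 2 * δ + 3 * a * α ^ 7 * γ * δ ^ 2 + 36 * α ^ 7 * β ^ 2 * γ + 9 *
      α ^ 8 * β * δ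

/-- The coefficient of `X ^ 9` in `F_a(αX + β, γX + δ)`. -/
def e9 : R :=
    -β * γ ^ 9 - 9 * α * γ ^ 8 * δ - 3 * a * α ^ 2 * β * γ ^ 7 - 7 * a * α ^ 3 * γ ^ 6 * δ +
      7 * a * α ^ 6 * β * γ ^ 3 + 3 * a * α ^ 7 * γ ^ 2 * δ + 9 * α ^ 8 * β * γ + α ^ 9 * δ

/-- The coefficient of `X ^ 10` in `F_a(αX + β, γX + δ)`. -/
def e10 : R :=
    -α * γ ^ 9 - a * α ^ 3 * γ ^ 7 + a * α ^ 7 * γ ^ 3 + α ^ 9 * γ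

/-- Invariance of `360 (F, F)₁₀` under linear substitution, for the forms `F_a`. -/
lemma invariant_identity :
    720 * e0 a β δ * e10 a α γ - 72 * e1 a α β γ δ * e9 a α β γ δ
      + 16 * e2 a α β γ δ * e8 a α β γ δ - 6 * e3 a α β γ δ * e7 a α β γ δ
      + 168 * d4 a α β γ δ * d6 a α β γ δ - 70 * d5 a α β γ δ ^ 2
      = 6 * (α * δ - β * γ) ^ 10 * (a ^ 2 + 12) := by
  simp only [e0, e1, e2, e3, d4, d5, d6, e7, e8, e9, e10]
  ring

end Coefficients

/-- Coefficient expansion of `F_a(αX + β, γX + δ)`. -/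
lemma subst_expand {k : Type*} [Field k] (a α β γ δ : k) :
    (C α * X + C β) ^ 9 * (C γ * X + C δ) + C a * (C α * X + C β) ^ 7 * (C γ * X + C δ) ^ 3
      - C a * (C α * X + C β) ^ 3 * (C γ * X + C δ) ^ 7 - (C α * X + C β) * (C γ * X + C δ) ^ 9
    = C (e0 a β δ) * X ^ 0
      + C (e1 a α β γ δ) * X ^ 1
      + C (e2 a α β γ δ) * X ^ 2
      + C (e3 a α β γ δ) * X ^ 3
      + C (7 * d4 a α β γ δ) * X ^ 4
      + C (7 * d5 a α β γ δ) * X ^ 5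
      + C (7 * d6 a α β γ δ) * X ^ 6
      + C (e7 a α β γ δ) * X ^ 7
      + C (e8 a α β γ δ) * X ^ 8
      + C (e9 a α β γ δ) * X ^ 9
      + C (e10 a α γ) * X ^ 10 := by
  simp only [e0, e1, e2, e3, d4, d5, d6, e7, e8, e9, e10, map_add, map_sub, map_mul, map_pow,
    map_neg, map_ofNat]
  ring

theorem stmt_12 (p : ℕ) (hp : p.Prime) (hp7 : 7 ≤ p)
    (k : Type*) [Field k] [IsAlgClosed k] [CharP k p]
    (c : k) (hc : c ^ 2 = -12)
    (b : k) (hb : b ∉ ({2, -2} : Set k)) :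
    Iso b c ↔ (b = c ∨ b = -c) := by
  constructor
  · rintro ⟨α, β, γ, δ, l, -, hl, h⟩
    rw [subst_sum, subst_expand, f_expand] at h
    have six_ne : (6 : k) ≠ 0 := by
      intro h0
      have : p ∣ 6 := (CharP.cast_eq_zero_iff k p 6).1 (by exact_mod_cast h0)
      exact absurd (Nat.le_of_dvd (by norm_num) this) (by omega)
    have key := fun n => congrArg (fun q : k[X] => q.coeff n) h
    have h0 := key 0
    have h1 := key 1
    have h2 := key 2
    have h3 := key 3
    have h4 := key 4
    have h5 := key 5
    have h6 := key 6
    have h7 := key 7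
    have h8 := key 8
    have h9 := key 9
    have h10 := key 10
    simp only [coeff_C_mul, coeff_add, coeff_sub, coeff_X_pow, coeff_X]
      at h0 h1 h2 h3 h4 h5 h6 h7 h8 h9 h10
    norm_num at h0 h1 h2 h3 h4 h5 h6 h7 h8 h9 h10
    have m4 := mul_eq_zero.2 h4
    have m5 := mul_eq_zero.2 h5
    have inv := invariant_identity c α β γ δ
    rw [← h0, ← h1, ← h2, ← h3, ← h7, ← h8, ← h9, ← h10, hc] at inv
    have hprod : 6 * l ^ 4 * (b ^ 2 + 12) = 0 := by
      linear_combination inv - 24 * d6 c α β γ δ * m4 + 10 * d5 c α β γ δ * m5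
    have hb2 : b ^ 2 + 12 = 0 :=
      (mul_eq_zero.1 hprod).resolve_left (mul_ne_zero six_ne (pow_ne_zero 4 hl))
    exact sq_eq_sq_iff_eq_or_eq_neg.1 (by linear_combination hb2 - hc)
  · rintro (rfl | rfl)
    · refine ⟨1, 0, 0, 1, 1, by simp, one_ne_zero, ?_⟩
      rw [subst_sum, f_expand]
      simp
    · obtain ⟨i, hi⟩ := IsAlgClosed.exists_pow_nat_eq (-1 : k) (n := 2) (by norm_num)
      obtain ⟨l, hl⟩ := IsAlgClosed.exists_pow_nat_eq i (n := 2) (by norm_num)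
      have hi0 : i ≠ 0 := by rintro rfl; simp at hi
      have hl0 : l ≠ 0 := by rintro rfl; simp at hl; exact hi0 hl.symm
      refine ⟨i, 0, 0, 1, l, by simpa using hi0, hl0, ?_⟩
      -- `f_c(iX) = i f_{-c}(X)`, and `λ` is a square root of `i`.
      rw [subst_sum, f_expand, hl]
      have hI : (C i : k[X]) ^ 2 = -1 := by rw [← C_pow, hi]; simp
      have h3 : (C i : k[X]) ^ 3 = -C i := by linear_combination C i * hI
      have h7 : (C i : k[X]) ^ 7 = -C i := by
        linear_combination (C i ^ 5 - C i ^ 3 + C i) * hI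
      have h9 : (C i : k[X]) ^ 9 = C i := by
        linear_combination (C i ^ 7 - C i ^ 5 + C i ^ 3 - C i) * hI
      simp only [map_neg, map_zero, map_one, zero_mul, zero_add, add_zero, mul_pow, one_pow, mul_one,
        h3, h7, h9]
      ring
end

section
/- Let a, b ∈ k with a, b ∉ {2, −2}. Then Iso(b,a) holds (i.e. H_a and H_b are isomorphic over k) if and only if b ∈ {a, −a, 2 − 16/(a+2), −(2 − 16/(a+2)), 2 + 16/(a−2), −(2 + 16/(a−2))}. -/
/-!
The curve `H_a` is determined by its branch locus `branch a ⊆ ℙ¹(k)`, which is the octahedron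
`{0, ∞, ±1, ±i}` together with an orbit of four points of the Klein four-group
`V = {x, -x, 1/x, -1/x}`. By `iso_iff` and `carries_mob`, an isomorphism from `H_b` to `H_a` is a
Möbius transformation `M` with `M (branch b) = branch a`.

* If `M` normalizes `V`, it permutes the three involutions of `V`. Each of the six permutations is
  induced by an explicit octahedral substitution, carrying `branch b'` to `branch a` for one of the
  six listed parameters `b'`. As `V` is its own centralizer in `PGL₂(k)` (`mem_klein_of_comm`) and
  preserves every branch locus, `b = b'` (`normalizing_cases`).
* In general, `V` and `M V M⁻¹` are subgroups of order four of the finite group `G = redAut a` of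
  Möbius transformations preserving `branch a`. If `8 ∤ |G|` they are Sylow `2`-subgroups, hence
  conjugate in `G`, and `M` can be replaced by some `g M` that normalizes `V`.
* If `8 ∣ |G|`, then `V` has index two in a subgroup of `G` of order eight, so `G` contains an
  element outside `V` normalizing `V` with square in `V`. It induces a transposition of the
  involutions of `V`, which forces `a ∈ {0, 6, -6}` (`eq_of_normalizing`). The same argument for
  `M V M⁻¹` gives `b ∈ {0, 6, -6}`, and these three parameters have the same set of six associated
  values.
-/

open Polynomial

/-! ### Subgroups of order four in a finite group -/

section GroupTheory

variable {Γ : Type*} [Group Γ]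

/-- Two subgroups of order four are conjugate if eight does not divide the order of the group, since
they are then Sylow `2`-subgroups. -/
theorem exists_conj_of_not_dvd (G V W : Subgroup Γ) [Finite G] (hV : V ≤ G) (hW : W ≤ G)
    (cV : Nat.card V = 4) (cW : Nat.card W = 4) (h8 : ¬ 8 ∣ Nat.card G) :
    ∃ g ∈ G, ∀ w ∈ W, g * w * g⁻¹ ∈ V := by
  have : Fact (Nat.Prime 2) := ⟨Nat.prime_two⟩
  have cV' : Nat.card (V.subgroupOf G) = 4 := by
    rw [Nat.card_congr (Subgroup.subgroupOfEquivOfLe hV).toEquiv, cV]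
  have cW' : Nat.card (W.subgroupOf G) = 4 := by
    rw [Nat.card_congr (Subgroup.subgroupOfEquivOfLe hW).toEquiv, cW]
  have h4 : 4 ∣ Nat.card G := cV' ▸ Subgroup.card_subgroup_dvd_card (V.subgroupOf G)
  have hf : (Nat.card G).factorization 2 = 2 := by
    have hne : Nat.card G ≠ 0 := Nat.card_pos.ne'
    have h1 := (Nat.prime_two.pow_dvd_iff_le_factorization (k := 2) hne).1 (by simpa using h4)
    have h2 := mt (Nat.prime_two.pow_dvd_iff_le_factorization (k := 3) hne).2 (by simpa using h8)
    omega
  obtain ⟨g, hg⟩ := MulAction.exists_smul_eq G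
    (Sylow.ofCard (p := 2) (W.subgroupOf G) (by rw [cW', hf]; rfl))
    (Sylow.ofCard (p := 2) (V.subgroupOf G) (by rw [cV', hf]; rfl))
  refine ⟨g, g.2, fun w hw => ?_⟩
  have hg' := congrArg (fun P : Sylow 2 G => (P : Subgroup G)) hg
  simp only [Sylow.coe_subgroup_smul, Sylow.coe_ofCard] at hg'
  have hm : g * ⟨w, hW hw⟩ * g⁻¹ ∈ V.subgroupOf G := by
    rw [← hg', ← MulAut.conj_apply]
    exact Subgroup.smul_mem_pointwise_smul _ _ _ (by simpa [Subgroup.mem_subgroupOf] using hw)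
  simpa [Subgroup.mem_subgroupOf] using hm

/-- If eight divides the order of the group, a subgroup `V` of order four has index two in a
subgroup of order eight, which therefore normalizes `V` and whose elements have their squares in `V`. -/
theorem exists_normalizing_of_dvd (G V : Subgroup Γ) [Finite G] (hV : V ≤ G)
    (cV : Nat.card V = 4) (h8 : 8 ∣ Nat.card G) :
    ∃ g ∈ G, g ∉ V ∧ g * g ∈ V ∧ ∀ v ∈ V, g * v * g⁻¹ ∈ V := by
  have : Fact (Nat.Prime 2) := ⟨Nat.prime_two⟩
  have cV' : Nat.card (V.subgroupOf G) = 2 ^ 2 := by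
    rw [Nat.card_congr (Subgroup.subgroupOfEquivOfLe hV).toEquiv, cV]
    norm_num
  obtain ⟨K, cK, hK⟩ := Sylow.exists_subgroup_card_pow_succ (by simpa using h8) cV'
  have hidx : ((V.subgroupOf G).subgroupOf K).index = 2 := by
    have h := Subgroup.card_mul_index ((V.subgroupOf G).subgroupOf K)
    rw [Nat.card_congr (Subgroup.subgroupOfEquivOfLe hK).toEquiv, cV', cK] at h
    omega
  have hnorm := Subgroup.normal_of_index_eq_two hidx
  obtain ⟨g, hg⟩ : ∃ g, g ∉ (V.subgroupOf G).subgroupOf K := by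
    by_contra! h
    rw [(Subgroup.eq_top_iff' _).2 h, Subgroup.index_top] at hidx
    omega
  refine ⟨g, g.1.2, ?_, ?_, fun v hv => ?_⟩
  · simpa [Subgroup.mem_subgroupOf] using hg
  · simpa [Subgroup.mem_subgroupOf] using Subgroup.mul_self_mem_of_index_two hidx g
  · have hvK : (⟨v, hV hv⟩ : G) ∈ K := hK (by simpa [Subgroup.mem_subgroupOf] using hv)
    have := hnorm.conj_mem ⟨⟨v, hV hv⟩, hvK⟩ (by simpa [Subgroup.mem_subgroupOf] using hv) g
    simpa [Subgroup.mem_subgroupOf] using this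

end GroupTheory

/-! ### Möbius transformations -/

section Moebius

open Matrix OnePoint

variable {k : Type*} [Field k] [DecidableEq k]

variable (k) in
/-- The group of Möbius transformations, as permutations of the projective line `OnePoint k`. -/
noncomputable def mobGroup : Subgroup (Equiv.Perm (OnePoint k)) :=
  (MulAction.toPermHom (GL (Fin 2) k) (OnePoint k)).range

/-- The Möbius transformation `x ↦ (α x + β) / (γ x + δ)`. -/
noncomputable def mob (α β γ δ : k) (h : α * δ - β * γ ≠ 0) : Equiv.Perm (OnePoint k) :=
  MulAction.toPermHom (GL (Fin 2) k) (OnePoint k)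
    (GeneralLinearGroup.mkOfDetNeZero !![α, β; γ, δ] (by simpa [det_fin_two] using h))

theorem mob_mem (α β γ δ : k) (h : α * δ - β * γ ≠ 0) : mob α β γ δ h ∈ mobGroup k :=
  ⟨_, rfl⟩

theorem exists_mob {g : Equiv.Perm (OnePoint k)} (hg : g ∈ mobGroup k) :
    ∃ α β γ δ h, g = mob α β γ δ h := by
  obtain ⟨A, rfl⟩ := hg
  refine ⟨A 0 0, A 0 1, A 1 0, A 1 1, ?_, ?_⟩
  · have := A.det_ne_zero
    rwa [det_fin_two] at this
  · unfold mob
    congr 1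
    ext i j
    fin_cases i <;> fin_cases j <;> rfl

theorem mob_infty (α β γ δ : k) (h : α * δ - β * γ ≠ 0) :
    mob α β γ δ h ∞ = if γ = 0 then ∞ else ((α / γ : k) : OnePoint k) :=
  smul_infty_eq_ite _

theorem mob_coe (α β γ δ : k) (h : α * δ - β * γ ≠ 0) (x : k) :
    mob α β γ δ h x = if γ * x + δ = 0 then ∞ else
      (((α * x + β) / (γ * x + δ) : k) : OnePoint k) :=
  smul_some_eq_ite

theorem mob_congr {α β γ δ α' β' γ' δ' : k} {h : α * δ - β * γ ≠ 0}
    {h' : α' * δ' - β' * γ' ≠ 0} (c : k) (h₁ : α' = c * α) (h₂ : β' = c * β) (h₃ : γ' = c * γ)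
    (h₄ : δ' = c * δ) : mob α' β' γ' δ' h' = mob α β γ δ h := by
  have hc : c ≠ 0 := by rintro rfl; simp_all
  subst h₁ h₂ h₃ h₄
  ext x
  cases x with
  | infty => simp [mob_infty, hc, mul_div_mul_left]
  | coe x =>
    rw [mob_coe, mob_coe, show c * γ * x + c * δ = c * (γ * x + δ) by ring,
      show c * α * x + c * β = c * (α * x + β) by ring]
    simp [hc, mul_div_mul_left]

theorem mob_mul (α β γ δ α' β' γ' δ' : k) (h : α * δ - β * γ ≠ 0) (h' : α' * δ' - β' * γ' ≠ 0) :
    mob α β γ δ h * mob α' β' γ' δ' h' =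
      mob (α * α' + β * γ') (α * β' + β * δ') (γ * α' + δ * γ') (γ * β' + δ * δ')
        (by convert mul_ne_zero h h' using 1; ring) := by
  unfold mob
  rw [← map_mul]
  congr 1
  ext i j
  fin_cases i <;> fin_cases j <;> simp [GeneralLinearGroup.mkOfDetNeZero, mul_apply]

/-- An identity `A B = c C A` of matrices gives `A B = C A` for the Möbius transformations. -/
theorem mob_comm_of {α β γ δ u v w z u' v' w' z' : k} {h : α * δ - β * γ ≠ 0}
    {h₁ : u * z - v * w ≠ 0} {h₂ : u' * z' - v' * w' ≠ 0} (c : k)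
    (e₁ : α * u + β * w = c * (u' * α + v' * γ)) (e₂ : α * v + β * z = c * (u' * β + v' * δ))
    (e₃ : γ * u + δ * w = c * (w' * α + z' * γ)) (e₄ : γ * v + δ * z = c * (w' * β + z' * δ)) :
    mob α β γ δ h * mob u v w z h₁ = mob u' v' w' z' h₂ * mob α β γ δ h := by
  rw [mob_mul, mob_mul]
  exact mob_congr c e₁ e₂ e₃ e₄

/-- A Möbius transformation fixing `0`, `1` and `∞` is the identity. -/
theorem eq_one_of_fix {g : Equiv.Perm (OnePoint k)} (hg : g ∈ mobGroup k)
    (h0 : g ((0 : k) : OnePoint k) = ((0 : k) : OnePoint k)) (hi : g ∞ = ∞)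
    (h1 : g ((1 : k) : OnePoint k) = ((1 : k) : OnePoint k)) : g = 1 := by
  obtain ⟨α, β, γ, δ, h, rfl⟩ := exists_mob hg
  have hγ : γ = 0 := by
    by_contra hγ
    simp [mob_infty, hγ] at hi
  subst hγ
  have hδ : δ ≠ 0 := by rintro rfl; simp at h
  have hβ : β = 0 := by simpa [mob_coe, hδ] using h0
  subst hβ
  have hα : α = δ := by simpa [mob_coe, hδ, div_eq_one_iff_eq] using h1
  subst hα
  ext x
  cases x with
  | infty => simp [mob_infty]
  | coe x => simp [mob_coe, hδ, mul_div_cancel_left₀]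


/-! ### The Klein four-group -/

/-- The involution `x ↦ -x`. -/
noncomputable def invNeg : Equiv.Perm (OnePoint k) := mob (-1) 0 0 1 (by simp)

/-- The involution `x ↦ 1 / x`. -/
noncomputable def invRec : Equiv.Perm (OnePoint k) := mob 0 1 1 0 (by simp)

theorem invNeg_coe (x : k) : invNeg (x : OnePoint k) = ((-x : k) : OnePoint k) := by
  simp [invNeg, mob_coe]

theorem invNeg_infty : invNeg (∞ : OnePoint k) = ∞ := by
  simp [invNeg, mob_infty]

theorem invRec_coe (x : k) : invRec (x : OnePoint k) =
    if x = 0 then ∞ else ((x⁻¹ : k) : OnePoint k) := by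
  simp [invRec, mob_coe]

theorem invRec_infty : invRec (∞ : OnePoint k) = ((0 : k) : OnePoint k) := by
  simp [invRec, mob_infty]

theorem invNeg_mul_self : (invNeg * invNeg : Equiv.Perm (OnePoint k)) = 1 := by
  ext x
  cases x <;> simp [invNeg_coe, invNeg_infty]

theorem invRec_mul_self : (invRec * invRec : Equiv.Perm (OnePoint k)) = 1 := by
  ext x
  cases x with
  | infty => simp [invRec_coe, invRec_infty]
  | coe x => by_cases h : x = 0 <;> simp [invRec_coe, invRec_infty, h]

theorem invRec_mul_invNeg : (invRec * invNeg : Equiv.Perm (OnePoint k)) = invNeg * invRec :=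
  mob_comm_of (-1) (by simp) (by simp) (by simp) (by simp)

variable (k) in
/-- The Klein four-group `{x, -x, 1/x, -1/x}`, the image in `PGL₂(k)` of the group `Q₈` acting on
every curve `H_a`. -/
noncomputable def klein : Subgroup (Equiv.Perm (OnePoint k)) where
  carrier := {1, invNeg, invRec, invNeg * invRec}
  one_mem' := by simp
  mul_mem' := by
    have h1 := invNeg_mul_self (k := k)
    have h2 := invRec_mul_self (k := k)
    have h3 := invRec_mul_invNeg (k := k)
    have h4 : ∀ g : Equiv.Perm (OnePoint k), invNeg * (invNeg * g) = g := fun g => by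
      rw [← mul_assoc, h1, one_mul]
    have h6 : ∀ g : Equiv.Perm (OnePoint k), invRec * (invNeg * g) = invNeg * (invRec * g) :=
      fun g => by rw [← mul_assoc, h3, mul_assoc]
    rintro _ _ (rfl | rfl | rfl | rfl) (rfl | rfl | rfl | rfl) <;>
      simp [mul_assoc, h1, h2, h3, h4, h6]
  inv_mem' := by
    have h1 : (invNeg : Equiv.Perm (OnePoint k))⁻¹ = invNeg :=
      inv_eq_of_mul_eq_one_left invNeg_mul_self
    have h2 : (invRec : Equiv.Perm (OnePoint k))⁻¹ = invRec :=
      inv_eq_of_mul_eq_one_left invRec_mul_self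
    rintro _ (rfl | rfl | rfl | rfl) <;> simp [h1, h2, invRec_mul_invNeg]

theorem mem_klein {g : Equiv.Perm (OnePoint k)} :
    g ∈ klein k ↔ g = 1 ∨ g = invNeg ∨ g = invRec ∨ g = invNeg * invRec := Iff.rfl

theorem klein_comm {g h : Equiv.Perm (OnePoint k)} (hg : g ∈ klein k) (hh : h ∈ klein k) :
    g * h = h * g := by
  have h3 := invRec_mul_invNeg (k := k)
  have h6 : ∀ g : Equiv.Perm (OnePoint k), invRec * (invNeg * g) = invNeg * (invRec * g) :=
      fun g => by rw [← mul_assoc, h3, mul_assoc]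
  rcases mem_klein.1 hg with rfl | rfl | rfl | rfl <;>
    rcases mem_klein.1 hh with rfl | rfl | rfl | rfl <;> simp [mul_assoc, h3, h6]

omit [DecidableEq k] in
theorem neg_one_ne_one (h2 : (2 : k) ≠ 0) : (-1 : k) ≠ 1 := fun h => h2 (by linear_combination -h)

theorem invNeg_ne_one (h2 : (2 : k) ≠ 0) : (invNeg : Equiv.Perm (OnePoint k)) ≠ 1 := fun h => by
  have := congrArg (fun g : Equiv.Perm (OnePoint k) => g ((1 : k) : OnePoint k)) h
  simp [invNeg_coe, neg_one_ne_one h2] at this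

theorem invRec_ne_one : (invRec : Equiv.Perm (OnePoint k)) ≠ 1 := fun h => by
  have := congrArg (fun g : Equiv.Perm (OnePoint k) => g ∞) h
  simp [invRec_infty] at this

theorem invNeg_ne_invRec : (invNeg : Equiv.Perm (OnePoint k)) ≠ invRec := fun h => by
  have := congrArg (fun g : Equiv.Perm (OnePoint k) => g ∞) h
  simp [invRec_infty, invNeg_infty] at this

theorem invNeg_ne_mul : (invNeg : Equiv.Perm (OnePoint k)) ≠ invNeg * invRec := fun h =>
  invRec_ne_one (mul_left_cancel (by rw [← h, mul_one]))

theorem invRec_ne_mul (h2 : (2 : k) ≠ 0) :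
    (invRec : Equiv.Perm (OnePoint k)) ≠ invNeg * invRec := fun h =>
  invNeg_ne_one h2 (mul_right_cancel (by rw [← h, one_mul]))

theorem invNeg_mul_invRec_ne_one : (invNeg * invRec : Equiv.Perm (OnePoint k)) ≠ 1 := fun h =>
  invNeg_ne_invRec (mul_right_cancel (by rw [h, invRec_mul_self]))

theorem card_klein (h2 : (2 : k) ≠ 0) : Nat.card (klein k) = 4 := by
  change Nat.card ({1, invNeg, invRec, invNeg * invRec} : Set (Equiv.Perm (OnePoint k))) = 4
  rw [Nat.card_coe_set_eq, Set.ncard_insert_of_notMem, Set.ncard_insert_of_notMem,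
    Set.ncard_insert_of_notMem, Set.ncard_singleton]
  · simpa using invRec_ne_mul h2
  · simp only [Set.mem_insert_iff, Set.mem_singleton_iff, not_or]
    exact ⟨invNeg_ne_invRec, invNeg_ne_mul⟩
  · simp only [Set.mem_insert_iff, Set.mem_singleton_iff, not_or]
    exact ⟨(invNeg_ne_one h2).symm, invRec_ne_one.symm, invNeg_mul_invRec_ne_one.symm⟩

theorem klein_le_mobGroup : klein k ≤ mobGroup k := by
  intro g hg
  have h1 : (invNeg : Equiv.Perm (OnePoint k)) ∈ mobGroup k := mob_mem _ _ _ _ _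
  have h2 : (invRec : Equiv.Perm (OnePoint k)) ∈ mobGroup k := mob_mem _ _ _ _ _
  rcases mem_klein.1 hg with rfl | rfl | rfl | rfl
  exacts [one_mem _, h1, h2, mul_mem h1 h2]

theorem fix_invNeg (h2 : (2 : k) ≠ 0) {y : OnePoint k} (h : y = invNeg y) :
    y = ((0 : k) : OnePoint k) ∨ y = ∞ := by
  cases y with
  | infty => simp
  | coe y =>
    rw [invNeg_coe, OnePoint.coe_eq_coe] at h
    left
    have : 2 * y = 0 := by linear_combination h
    simpa [h2] using this

theorem fix_invRec {y : OnePoint k} (h : y = invRec y) :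
    y = ((1 : k) : OnePoint k) ∨ y = ((-1 : k) : OnePoint k) := by
  cases y with
  | infty => simp [invRec_infty] at h
  | coe y =>
    rw [invRec_coe] at h
    by_cases hy : y = 0
    · simp [hy] at h
    · rw [if_neg hy, OnePoint.coe_eq_coe] at h
      have hyy : y * y = 1 := by
        nth_rewrite 2 [h]
        exact mul_inv_cancel₀ hy
      simpa using mul_self_eq_one_iff.1 hyy

/-- The Klein four-group is its own centralizer in `PGL₂(k)`: an element commuting with `x ↦ -x` and
`x ↦ 1/x` permutes their fixed points `0, ∞` and `±1`, and up to the Klein four-group it therefore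
fixes `0`, `∞` and `1`. -/
theorem mem_klein_of_comm (h2 : (2 : k) ≠ 0) {g : Equiv.Perm (OnePoint k)} (hg : g ∈ mobGroup k)
    (h₁ : g * invNeg = invNeg * g) (h₂ : g * invRec = invRec * g) : g ∈ klein k := by
  have e0 : g ((0 : k) : OnePoint k) = invNeg (g ((0 : k) : OnePoint k)) := by
    rw [← Equiv.Perm.mul_apply, ← h₁, Equiv.Perm.mul_apply, invNeg_coe, neg_zero]
  have e1 : g ((1 : k) : OnePoint k) = invRec (g ((1 : k) : OnePoint k)) := by
    rw [← Equiv.Perm.mul_apply, ← h₂, Equiv.Perm.mul_apply, invRec_coe]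
    simp
  have ei : g ∞ = invRec (g ((0 : k) : OnePoint k)) := by
    rw [← Equiv.Perm.mul_apply, ← h₂, Equiv.Perm.mul_apply, invRec_coe]
    simp
  have key : ∀ w ∈ klein k, (w * g) ((0 : k) : OnePoint k) = ((0 : k) : OnePoint k) →
      (w * g) ∞ = ∞ → (w * g) ((1 : k) : OnePoint k) = ((1 : k) : OnePoint k) → g ∈ klein k := by
    intro w hw h0 hi h1
    have := eq_one_of_fix (mul_mem (klein_le_mobGroup hw) hg) h0 hi h1
    rw [← inv_eq_of_mul_eq_one_right this]
    exact inv_mem hw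
  rcases fix_invNeg h2 e0 with a0 | a0 <;> rcases fix_invRec e1 with a1 | a1 <;> rw [a0] at ei
  · exact key 1 (one_mem _) (by simp [a0]) (by simp [ei, invRec_coe]) (by simp [a1])
  · exact key invNeg (mem_klein.2 (by simp)) (by simp [a0, invNeg_coe])
      (by simp [ei, invRec_coe, invNeg_infty]) (by simp [a1, invNeg_coe])
  · exact key invRec (mem_klein.2 (by simp)) (by simp [a0, invRec_infty])
      (by simp [ei, invRec_coe, invRec_infty]) (by simp [a1, invRec_coe])
  · exact key (invNeg * invRec) (mem_klein.2 (by simp)) (by simp [a0, invRec_infty, invNeg_coe])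
      (by simp [ei, invRec_coe, invRec_infty, invNeg_infty])
      (by simp [a1, invRec_coe, invNeg_coe, inv_neg])

/-! ### Branch loci -/

/-- The binary form of degree ten `X Y (X⁴ - Y⁴) (X⁴ + a X² Y² + Y⁴)` obtained by homogenizing
`f a`. -/
def bform (a x y : k) : k := x * y * (x ^ 4 - y ^ 4) * (x ^ 4 + a * x ^ 2 * y ^ 2 + y ^ 4)

/-- The branch locus of `H_a → ℙ¹`: the roots of `f a`, together with `∞`. -/
def branch (a : k) : Set (OnePoint k) := {p | ∀ t : k, p = (t : OnePoint k) → bform a t 1 = 0}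

omit [DecidableEq k] in
theorem coe_mem_branch {a t : k} : (t : OnePoint k) ∈ branch a ↔ bform a t 1 = 0 := by
  simp [branch]

omit [DecidableEq k] in
theorem infty_mem_branch (a : k) : (∞ : OnePoint k) ∈ branch a := by
  simp [branch]

/-- The permutation `g` of the projective line carries the branch locus of `H_b` to that of
`H_a`. -/
def Carries (b a : k) (g : Equiv.Perm (OnePoint k)) : Prop := ∀ p, p ∈ branch b ↔ g p ∈ branch a

omit [DecidableEq k] in
theorem Carries.mul {a b c : k} {g h : Equiv.Perm (OnePoint k)} (hg : Carries b a g)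
    (hh : Carries c b h) : Carries c a (g * h) := fun p => (hh p).trans (hg (h p))

omit [DecidableEq k] in
theorem Carries.inv {a b : k} {g : Equiv.Perm (OnePoint k)} (hg : Carries b a g) :
    Carries a b g⁻¹ := fun p => by
  rw [hg, ← Equiv.Perm.mul_apply, mul_inv_cancel, Equiv.Perm.one_apply]

omit [DecidableEq k] in
theorem bform_smul (a x y c : k) : bform a (c * x) (c * y) = c ^ 10 * bform a x y := by
  unfold bform; ring

/-- The point `[x : y]` lies in the branch locus exactly when the form vanishes there. For
`x = y = 0` both sides hold, the left one because the `if` then yields `∞`. -/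
theorem coe_div_mem_branch {a x y : k} :
    (if y = 0 then ∞ else ((x / y : k) : OnePoint k)) ∈ branch a ↔ bform a x y = 0 := by
  by_cases hy : y = 0
  · simp [hy, infty_mem_branch, bform]
  · have h := bform_smul a (x / y) 1 y
    rw [mul_div_cancel₀ _ hy, mul_one] at h
    rw [if_neg hy, coe_mem_branch, h]
    simp [hy]

/-- A linear substitution matching the forms up to a nonzero factor matches the branch loci. -/
theorem carries_mob {a b α β γ δ c : k} (h : α * δ - β * γ ≠ 0) (hc : c ≠ 0)
    (H : ∀ x y, c * bform b x y = bform a (α * x + β * y) (γ * x + δ * y)) :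
    Carries b a (mob α β γ δ h) := by
  intro p
  cases p with
  | infty =>
    have h1 := H 1 0
    have hz : bform b 1 0 = 0 := by simp [bform]
    simp only [mul_one, mul_zero, add_zero, hz] at h1
    rw [mob_infty, coe_div_mem_branch, ← h1]
    simp [infty_mem_branch]
  | coe x =>
    have h1 := H x 1
    simp only [mul_one] at h1
    rw [mob_coe, coe_div_mem_branch, ← h1, coe_mem_branch]
    simp [hc]

omit [DecidableEq k] in
/-- The polynomial identity in the definition of `Iso` is equivalent to an identity between
homogeneous forms. -/
theorem iso_iff [Infinite k] {a b : k} : Iso b a ↔ ∃ α β γ δ lam : k, α * δ - β * γ ≠ 0 ∧ lam ≠ 0 ∧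
    ∀ x y, lam ^ 2 * bform b x y = bform a (α * x + β * y) (γ * x + δ * y) := by
  have hsum : ∀ α β γ δ : k, ∑ j ∈ Finset.range 10,
        C ((f a).coeff j) * (C α * X + C β) ^ j * (C γ * X + C δ) ^ (10 - j) =
      (C α * X + C β) * (C γ * X + C δ) * ((C α * X + C β) ^ 4 - (C γ * X + C δ) ^ 4) *
        ((C α * X + C β) ^ 4 + C a * (C α * X + C β) ^ 2 * (C γ * X + C δ) ^ 2
          + (C γ * X + C δ) ^ 4) := by
    intro α β γ δ
    have hf : f a = X ^ 9 + C a * X ^ 7 - C a * X ^ 3 - X := by unfold f; ring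
    simp [Finset.sum_range_succ, hf, coeff_X, coeff_X_pow]
    ring
  unfold Iso
  refine exists_congr fun α => exists_congr fun β => exists_congr fun γ => exists_congr fun δ =>
    exists_congr fun lam => and_congr_right fun _ => and_congr_right fun _ => ?_
  rw [hsum]
  constructor
  · intro h
    have hx : ∀ x, lam ^ 2 * bform b x 1 = bform a (α * x + β) (γ * x + δ) := fun x => by
      have := congrArg (eval x) h
      simp only [f, eval_mul, eval_C, eval_X, eval_sub, eval_add, eval_pow, eval_one] at this
      simp only [bform]
      linear_combination this
    have hy : ∀ x y, y ≠ 0 →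
        lam ^ 2 * bform b x y = bform a (α * x + β * y) (γ * x + δ * y) := fun x y hy => by
      have h1 := hx (x / y)
      have h2 := bform_smul b (x / y) 1 y
      have h3 := bform_smul a (α * (x / y) + β) (γ * (x / y) + δ) y
      rw [mul_div_cancel₀ _ hy, mul_one] at h2
      rw [show y * (α * (x / y) + β) = α * x + β * y by field_simp,
        show y * (γ * (x / y) + δ) = γ * x + δ * y by field_simp] at h3
      rw [h2, h3, ← h1]
      ring
    intro x y
    by_cases hy0 : y = 0
    · subst hy0
      -- both sides are polynomial in `y` and agree for `y ≠ 0`, hence they agree at `y = 0`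
      let q : k[X] := C (lam ^ 2) * (C x * X * (C x ^ 4 - X ^ 4) *
          (C x ^ 4 + C b * C x ^ 2 * X ^ 2 + X ^ 4)) -
        (C (α * x) + C β * X) * (C (γ * x) + C δ * X) *
          ((C (α * x) + C β * X) ^ 4 - (C (γ * x) + C δ * X) ^ 4) *
          ((C (α * x) + C β * X) ^ 4 + C a * (C (α * x) + C β * X) ^ 2 * (C (γ * x) + C δ * X) ^ 2
            + (C (γ * x) + C δ * X) ^ 4)
      have hq : ∀ y, q.eval y =
          lam ^ 2 * bform b x y - bform a (α * x + β * y) (γ * x + δ * y) := fun y => by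
        simp [q, bform]
      have hXq : X * q = 0 := Polynomial.funext fun y => by
        by_cases hy0 : y = 0
        · simp [hy0]
        · simp [hq, hy x y hy0]
      have hq0 : q = 0 := by simpa using hXq
      have := hq 0
      rw [hq0, eval_zero] at this
      exact (sub_eq_zero.1 this.symm)
    · exact hy x y hy0
  · intro h
    refine Polynomial.funext fun x => ?_
    have := h x 1
    simp only [bform] at this
    simp only [f, eval_mul, eval_C, eval_X, eval_sub, eval_add, eval_pow, eval_one]
    linear_combination this

omit [DecidableEq k] in
/-- The branch locus determines the parameter: a root `r` of `X⁴ + b X² + 1` lies outside the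
octahedron, so it is a root of `X⁴ + a X² + 1` as well. -/
theorem eq_of_branch [IsAlgClosed k] {a b : k} (hb : b ≠ 2) (hb' : b ≠ -2)
    (h : Carries b a 1) : b = a := by
  obtain ⟨r, hr⟩ := IsAlgClosed.exists_root (X ^ 4 + C b * X ^ 2 + 1 : k[X]) (by
    rw [show (X ^ 4 + C b * X ^ 2 + 1 : k[X]).degree = 4 by compute_degree!]; norm_num)
  simp only [IsRoot, eval_add, eval_pow, eval_X, eval_mul, eval_C, eval_one] at hr
  have hr0 : r ≠ 0 := by rintro rfl; simp at hr
  have hr4 : r ^ 4 - 1 ≠ 0 := fun h4 => by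
    have h1 : b * r ^ 2 = -2 := by linear_combination hr - h4
    have h2 : (b - 2) * (b + 2) = 0 := by
      linear_combination (b * r ^ 2 - 2) * h1 - b ^ 2 * h4
    rcases mul_eq_zero.1 h2 with h2 | h2
    · exact hb (sub_eq_zero.1 h2)
    · exact hb' (eq_neg_of_add_eq_zero_left h2)
  have h1 : (r : OnePoint k) ∈ branch b := by
    rw [coe_mem_branch, bform]
    linear_combination r * (r ^ 4 - 1) * hr
  have h2 := (h _).1 h1
  rw [Equiv.Perm.one_apply, coe_mem_branch, bform] at h2
  have h3 : r ^ 4 + a * r ^ 2 + 1 = 0 := by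
    have : r * (r ^ 4 - 1) * (r ^ 4 + a * r ^ 2 + 1) = 0 := by linear_combination h2
    simpa [hr0, hr4] using this
  have h4 : (b - a) * r ^ 2 = 0 := by linear_combination hr - h3
  simpa [hr0, sub_eq_zero] using h4

omit [DecidableEq k] in
theorem branch_finite (a : k) : (branch a).Finite := by
  have hf : f a ≠ 0 := by
    have : (f a).coeff 9 = 1 := by
      rw [show f a = X ^ 9 + C a * X ^ 7 - C a * X ^ 3 - X by unfold f; ring]
      simp [coeff_X, coeff_X_pow]
    intro h
    simp [h] at this
  refine (((finite_setOfPred_isRoot hf).image ((↑) : k → OnePoint k)).insert ∞).subset ?_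
  intro p hp
  cases p with
  | infty => simp
  | coe t =>
    right
    refine ⟨t, ?_, rfl⟩
    have := coe_mem_branch.1 hp
    simp only [bform] at this
    simp only [Set.mem_ofPred_eq, IsRoot, f, eval_mul, eval_C, eval_X, eval_sub, eval_add,
      eval_pow, eval_one]
    linear_combination this

/-- The reduced automorphism group of `H_a`: the Möbius transformations preserving the branch
locus. -/
noncomputable def redAut (a : k) : Subgroup (Equiv.Perm (OnePoint k)) where
  carrier := {g | g ∈ mobGroup k ∧ Carries a a g}
  one_mem' := ⟨one_mem _, fun _ => Iff.rfl⟩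
  mul_mem' hg hh := ⟨mul_mem hg.1 hh.1, hg.2.mul hh.2⟩
  inv_mem' hg := ⟨inv_mem hg.1, hg.2.inv⟩

theorem mem_redAut {a : k} {g : Equiv.Perm (OnePoint k)} :
    g ∈ redAut a ↔ g ∈ mobGroup k ∧ Carries a a g := Iff.rfl

/-- An automorphism is determined by the images of `0`, `1` and `∞` in the finite branch locus. -/
instance (a : k) : Finite (redAut a) := by
  have := (branch_finite a).to_subtype
  have m0 : ((0 : k) : OnePoint k) ∈ branch a := by simp [coe_mem_branch, bform]
  have m1 : ((1 : k) : OnePoint k) ∈ branch a := by simp [coe_mem_branch, bform]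
  have mi : (∞ : OnePoint k) ∈ branch a := infty_mem_branch a
  refine Finite.of_injective (β := branch a × branch a × branch a)
    (fun g => (⟨g.1 ((0 : k) : OnePoint k), (g.2.2 _).1 m0⟩,
      ⟨g.1 ((1 : k) : OnePoint k), (g.2.2 _).1 m1⟩, ⟨g.1 ∞, (g.2.2 _).1 mi⟩)) ?_
  intro g h hgh
  simp only [Prod.mk.injEq, Subtype.mk.injEq] at hgh
  obtain ⟨e0, e1, ei⟩ := hgh
  have : (h⁻¹ * g).1 = 1 := by
    apply eq_one_of_fix (h⁻¹ * g).2.1 <;>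
      rw [show (h⁻¹ * g).1 = h.1⁻¹ * g.1 from rfl, Equiv.Perm.mul_apply, Equiv.Perm.inv_eq_iff_eq]
    exacts [e0, ei, e1]
  exact (inv_mul_eq_one.1 (Subtype.ext this)).symm

/-- Both involutions multiply the form by `-1`. -/
theorem klein_le_redAut (a : k) : klein k ≤ redAut a := by
  have h1 : (invNeg : Equiv.Perm (OnePoint k)) ∈ redAut a :=
    ⟨mob_mem _ _ _ _ _, carries_mob _ (c := -1) (by simp) fun x y => by unfold bform; ring⟩
  have h2 : (invRec : Equiv.Perm (OnePoint k)) ∈ redAut a :=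
    ⟨mob_mem _ _ _ _ _, carries_mob _ (c := -1) (by simp) fun x y => by unfold bform; ring⟩
  intro g hg
  rcases mem_klein.1 hg with rfl | rfl | rfl | rfl
  exacts [one_mem _, h1, h2, mul_mem h1 h2]

/-! ### Octahedral substitutions -/

section Octahedral

omit [DecidableEq k]

/-- The form in terms of the three quadratic factors `X Y`, `X² - Y²`, `X² + Y²`, which the
octahedral group permutes up to scalars. -/
theorem bform_eq {a X Y p d s : k} (hp : X * Y = p) (hd : X ^ 2 - Y ^ 2 = d)
    (hs : X ^ 2 + Y ^ 2 = s) : bform a X Y = p * d * s * (s ^ 2 + (a - 2) * p ^ 2) := by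
  subst hp hd hs
  unfold bform
  ring

variable {a i : k}

theorem sub₁ (hi : i ^ 2 = -1) (x y : k) :
    i * bform (-a) x y = bform a (i * x + 0 * y) (0 * x + 1 * y) := by
  have h4 : i ^ 4 = 1 := by linear_combination (i ^ 2 - 1) * hi
  simp only [bform, zero_mul, add_zero, zero_add, one_mul, mul_pow, h4, hi]
  ring

theorem sub₂ (ha : a + 2 ≠ 0) (x y : k) :
    (8 * (a + 2)) * bform (-(2 - 16 / (a + 2))) x y = bform a (1 * x + 1 * y) (1 * x + -1 * y) := by
  rw [bform_eq (a := a) (p := x ^ 2 - y ^ 2) (d := 4 * x * y)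
    (s := 2 * (x ^ 2 + y ^ 2)) (by ring) (by ring) (by ring), bform]
  field_simp
  ring

theorem sub₃ (hi : i ^ 2 = -1) (ha : a + 2 ≠ 0) (x y : k) :
    (8 * i * (a + 2)) * bform (2 - 16 / (a + 2)) x y =
      bform a (1 * x + i * y) (1 * x + -i * y) := by
  rw [bform_eq (a := a) (p := x ^ 2 + y ^ 2) (d := 4 * i * x * y) (s := 2 * (x ^ 2 - y ^ 2))
    (by linear_combination (-y ^ 2) * hi) (by ring) (by linear_combination (2 * y ^ 2) * hi), bform]
  field_simp
  ring

theorem sub₄ (hi : i ^ 2 = -1) (ha : a - 2 ≠ 0) (x y : k) :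
    (-8 * i * (a - 2)) * bform (-(2 + 16 / (a - 2))) x y =
      bform a (1 * x + 1 * y) (i * x + -i * y) := by
  rw [bform_eq (a := a) (p := i * (x ^ 2 - y ^ 2)) (d := 2 * (x ^ 2 + y ^ 2)) (s := 4 * x * y)
    (by ring) (by linear_combination (-(x - y) ^ 2) * hi) (by linear_combination ((x - y) ^ 2) * hi),
    bform, mul_pow i, hi]
  field_simp
  ring

theorem sub₅ (hi : i ^ 2 = -1) (ha : a - 2 ≠ 0) (x y : k) :
    (8 * (a - 2)) * bform (2 + 16 / (a - 2)) x y =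
      bform a (1 * x + i * y) (i * x + 1 * y) := by
  rw [bform_eq (a := a) (p := i * (x ^ 2 + y ^ 2)) (d := 2 * (x ^ 2 - y ^ 2)) (s := i * (4 * x * y))
    (by linear_combination (x * y) * hi) (by linear_combination (y ^ 2 - x ^ 2) * hi)
    (by linear_combination (x ^ 2 + y ^ 2) * hi),
    bform, show ∀ p d s : k, i * p * d * (i * s) = i ^ 2 * (p * d * s) by intros; ring,
    mul_pow i, mul_pow i, hi]
  field_simp
  ring

theorem eight_ne_zero (h2 : (2 : k) ≠ 0) : (8 : k) ≠ 0 := by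
  rw [show (8 : k) = 2 ^ 3 by norm_num]
  exact pow_ne_zero 3 h2

theorem ne_zero_of_sq (hi : i ^ 2 = -1) : i ≠ 0 := by
  rintro rfl
  simp at hi

theorem iso_of_mem [IsAlgClosed k] (h2 : (2 : k) ≠ 0) {b : k} (ha : a + 2 ≠ 0) (ha' : a - 2 ≠ 0)
    (hb : b ∈ ({a, -a, 2 - 16 / (a + 2), -(2 - 16 / (a + 2)),
      2 + 16 / (a - 2), -(2 + 16 / (a - 2))} : Set k)) : Iso b a := by
  obtain ⟨i, hi⟩ := IsAlgClosed.exists_pow_nat_eq (-1 : k) (n := 2) (by norm_num)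
  have hi0 := ne_zero_of_sq hi
  have h8 := eight_ne_zero h2
  have key : ∀ α β γ δ c : k, α * δ - β * γ ≠ 0 → c ≠ 0 →
      (∀ x y, c * bform b x y = bform a (α * x + β * y) (γ * x + δ * y)) → Iso b a := by
    intro α β γ δ c h hc H
    obtain ⟨l, hl⟩ := IsAlgClosed.exists_pow_nat_eq c (n := 2) (by norm_num)
    refine iso_iff.2 ⟨α, β, γ, δ, l, h, ?_, by rwa [hl]⟩
    rintro rfl
    exact hc (by rw [← hl]; ring)
  rcases hb with rfl | rfl | rfl | rfl | rfl | rfl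
  · exact key 1 0 0 1 1 (by simp) (by simp) fun x y => by simp
  · exact key _ _ _ _ _ (by simpa using hi0) hi0 (sub₁ hi)
  · exact key _ _ _ _ _ (fun h => mul_ne_zero h2 hi0 (by linear_combination -h))
      (by simp [h8, hi0, ha]) (sub₃ hi ha)
  · exact key _ _ _ _ _ (fun h => h2 (by linear_combination -h)) (by simp [h8, ha]) (sub₂ ha)
  · exact key _ _ _ _ _ (fun h => h2 (by linear_combination h + hi)) (by simp [h8, ha'])
      (sub₅ hi ha')
  · exact key _ _ _ _ _ (fun h => mul_ne_zero h2 hi0 (by linear_combination -h))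
      (by simp [h8, hi0, ha']) (sub₄ hi ha')

end Octahedral

/-! ### The classification -/

/-- Two Möbius transformations onto the branch locus of `H_a` that induce the same conjugation on
the Klein four-group differ by an element of it, so they start from the same branch locus. -/
theorem compare [IsAlgClosed k] (h2 : (2 : k) ≠ 0) {a b b' : k} (hb : b ≠ 2) (hb' : b ≠ -2)
    {M h x y : Equiv.Perm (OnePoint k)} (hM : M ∈ mobGroup k) (hcM : Carries b a M)
    (hM₁ : M * invNeg = x * M) (hM₂ : M * invRec = y * M) (hh : h ∈ mobGroup k)
    (hch : Carries b' a h) (hh₁ : h * invNeg = x * h) (hh₂ : h * invRec = y * h) :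
    h⁻¹ * M ∈ klein k ∧ b = b' := by
  have comm : ∀ u z : Equiv.Perm (OnePoint k), M * u = z * M → h * u = z * h →
      h⁻¹ * M * u = u * (h⁻¹ * M) := fun u z e₁ e₂ => by
    rw [mul_assoc, e₁, inv_mul_eq_iff_eq_mul, ← mul_assoc, ← mul_assoc, e₂,
      mul_inv_cancel_right]
  have hw : h⁻¹ * M ∈ klein k :=
    mem_klein_of_comm h2 (mul_mem (inv_mem hh) hM) (comm _ _ hM₁ hh₁) (comm _ _ hM₂ hh₂)
  refine ⟨hw, eq_of_branch hb hb' ?_⟩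
  have := (klein_le_redAut b' hw).2.inv.mul (hch.inv.mul hcM)
  rwa [inv_mul_cancel] at this

/-- A Möbius transformation normalizing the Klein four-group induces one of the six permutations of
its involutions; each is also induced by an explicit octahedral substitution, which determines the
parameter of the source. -/
theorem normalizing_cases [IsAlgClosed k] (h2 : (2 : k) ≠ 0) {a b : k} (ha : a + 2 ≠ 0)
    (ha' : a - 2 ≠ 0) (hb : b ≠ 2) (hb' : b ≠ -2) {M : Equiv.Perm (OnePoint k)}
    (hM : M ∈ mobGroup k) (hc : Carries b a M) (hn : ∀ v ∈ klein k, M * v * M⁻¹ ∈ klein k) :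
    (b = a ∧ M ∈ klein k) ∨ b = -a ∨ b = -(2 - 16 / (a + 2)) ∨ b = 2 + 16 / (a - 2) ∨
    (b = 2 - 16 / (a + 2) ∧ M * invNeg = invRec * M ∧ M * invRec = invNeg * invRec * M) ∨
    (b = -(2 + 16 / (a - 2)) ∧ M * invNeg = invNeg * invRec * M ∧ M * invRec = invNeg * M) := by
  obtain ⟨i, hi⟩ := IsAlgClosed.exists_pow_nat_eq (-1 : k) (n := 2) (by norm_num)
  have hi0 := ne_zero_of_sq hi
  have h8 := eight_ne_zero h2
  have d₃ : (1 : k) * -i - i * 1 ≠ 0 := fun h => mul_ne_zero h2 hi0 (by linear_combination -h)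
  have d₄ : (1 : k) * -i - 1 * i ≠ 0 := fun h => mul_ne_zero h2 hi0 (by linear_combination -h)
  have d₅ : (1 : k) * 1 - i * i ≠ 0 := fun h => h2 (by linear_combination h + hi)
  have d₂ : (1 : k) * -1 - 1 * 1 ≠ 0 := fun h => h2 (by linear_combination -h)
  have d₁ : i * 1 - 0 * 0 ≠ 0 := by simpa using hi0
  have e3 : (invNeg * invRec : Equiv.Perm (OnePoint k)) =
      mob 0 (-1) 1 0 (by simp) := by
    unfold invNeg invRec
    rw [mob_mul]
    exact mob_congr 1 (by simp) (by simp) (by simp) (by simp)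
  have one_of : ∀ u z : Equiv.Perm (OnePoint k), M * u * M⁻¹ = z → M * u = z * M :=
    fun u z h => by rw [← h, inv_mul_cancel_right]
  have ne1 : ∀ u : Equiv.Perm (OnePoint k), u ≠ 1 → M * u * M⁻¹ ≠ 1 :=
    fun u hu h => hu (by simpa using h)
  have ne2 : M * invNeg * M⁻¹ ≠ M * invRec * M⁻¹ :=
    fun h => invNeg_ne_invRec (by simpa using h)
  rcases mem_klein.1 (hn invNeg (mem_klein.2 (by simp))) with h₁ | h₁ | h₁ | h₁ <;>
  rcases mem_klein.1 (hn invRec (mem_klein.2 (by simp))) with h₃ | h₃ | h₃ | h₃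
  all_goals first
    | exact absurd h₁ (ne1 _ (invNeg_ne_one h2))
    | exact absurd h₃ (ne1 _ invRec_ne_one)
    | exact absurd (h₁.trans h₃.symm) ne2
    | skip
  all_goals
    replace h₁ := one_of _ _ h₁
    replace h₃ := one_of _ _ h₃
  · obtain ⟨hw, e⟩ := compare h2 hb hb' (b' := a) hM hc h₁ h₃ (one_mem _) (fun _ => Iff.rfl)
      (by simp) (by simp)
    exact .inl ⟨e, by simpa using hw⟩
  · refine .inr (.inl (compare h2 hb hb' hM hc h₁ h₃ (mob_mem _ _ _ _ d₁)
      (carries_mob d₁ hi0 (sub₁ hi)) ?_ ?_).2)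
    · exact mob_comm_of 1 (by ring) (by ring) (by ring) (by ring)
    · rw [e3]
      exact mob_comm_of (-i) (by ring) (by ring) (by linear_combination hi) (by ring)
  · refine .inr (.inr (.inl (compare h2 hb hb' hM hc h₁ h₃ (mob_mem _ _ _ _ d₂)
      (carries_mob d₂ (by simp [h8, ha]) (sub₂ ha)) ?_ ?_).2))
    · exact mob_comm_of (-1) (by ring) (by ring) (by ring) (by ring)
    · exact mob_comm_of (-1) (by ring) (by ring) (by ring) (by ring)
  · refine .inr (.inr (.inr (.inr (.inl ⟨(compare h2 hb hb' hM hc h₁ h₃ (mob_mem _ _ _ _ d₃)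
      (carries_mob d₃ (by simp [h8, ha, hi0]) (sub₃ hi ha)) ?_ ?_).2, h₁, h₃⟩))))
    · exact mob_comm_of (-1) (by ring) (by ring) (by ring) (by ring)
    · rw [e3]
      exact mob_comm_of (-i) (by ring) (by linear_combination hi) (by ring)
        (by linear_combination hi)
  · refine .inr (.inr (.inr (.inr (.inr ⟨(compare h2 hb hb' hM hc h₁ h₃ (mob_mem _ _ _ _ d₄)
      (carries_mob d₄ (by simp [h8, ha', hi0]) (sub₄ hi ha')) ?_ ?_).2, h₁, h₃⟩))))
    · rw [e3]
      exact mob_comm_of (-i) (by linear_combination -hi) (by linear_combination hi) (by ring)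
        (by ring)
    · exact mob_comm_of (-1) (by ring) (by ring) (by ring) (by ring)
  · refine .inr (.inr (.inr (.inl (compare h2 hb hb' hM hc h₁ h₃ (mob_mem _ _ _ _ d₅)
      (carries_mob d₅ (by simp [h8, ha']) (sub₅ hi ha')) ?_ ?_).2)))
    · rw [e3]
      exact mob_comm_of (-i) (by linear_combination -hi) (by ring) (by ring)
        (by linear_combination hi)
    · exact mob_comm_of 1 (by ring) (by ring) (by ring) (by ring)

/-- If the reduced automorphism group contains an element outside the Klein four-group that
normalizes it and has its square in it, this element induces a transposition of the three
involutions, and `a` is one of the three parameters fixed by a transposition. -/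
theorem eq_of_normalizing [IsAlgClosed k] (h2 : (2 : k) ≠ 0) {a : k} (ha : a + 2 ≠ 0)
    (ha' : a - 2 ≠ 0) {g : Equiv.Perm (OnePoint k)} (hg : g ∈ redAut a) (hgV : g ∉ klein k)
    (hgg : g * g ∈ klein k) (hn : ∀ v ∈ klein k, g * v * g⁻¹ ∈ klein k) :
    a = 0 ∨ a = 6 ∨ a = -6 := by
  have hcomm := klein_comm hgg (mem_klein.2 (by simp) : invNeg ∈ klein k)
  rcases normalizing_cases h2 ha ha' (fun h => ha' (by rw [h]; ring)) (fun h => ha (by rw [h]; ring))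
    hg.1 hg.2 hn with h | h | h | h | h | h
  · exact absurd h.2 hgV
  · left
    have : 2 * a = 0 := by linear_combination h
    simpa [h2] using this
  · right; right
    have : (a - 2) * (a + 6) = 0 := by
      field_simp at h
      linear_combination h
    exact eq_neg_of_add_eq_zero_left ((mul_eq_zero.1 this).resolve_left ha')
  · right; left
    have : (a + 2) * (a - 6) = 0 := by
      field_simp at h
      linear_combination h
    exact sub_eq_zero.1 ((mul_eq_zero.1 this).resolve_left ha)
  -- a three-cycle is excluded, since its square would also act as a nontrivial three-cycle
  · rw [mul_assoc, h.2.1, ← mul_assoc, h.2.2, mul_assoc] at hcomm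
    exact absurd (mul_right_cancel hcomm).symm invNeg_ne_mul
  · rw [mul_assoc, h.2.1, ← mul_assoc, ← mul_assoc, h.2.1, mul_assoc _ g, h.2.2, ← mul_assoc,
      mul_assoc _ g] at hcomm
    have h3 := mul_right_cancel hcomm
    rw [mul_assoc, invRec_mul_invNeg, ← mul_assoc, invNeg_mul_self, one_mul] at h3
    exact absurd h3.symm invNeg_ne_invRec

/-- The forward direction of the classification, for branch loci. -/
theorem mem_of_carries [IsAlgClosed k] (h2 : (2 : k) ≠ 0) {a b : k} (ha : a + 2 ≠ 0)
    (ha' : a - 2 ≠ 0) (hb : b + 2 ≠ 0) (hb' : b - 2 ≠ 0) {M : Equiv.Perm (OnePoint k)}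
    (hM : M ∈ mobGroup k) (hc : Carries b a M) :
    b ∈ ({a, -a, 2 - 16 / (a + 2), -(2 - 16 / (a + 2)),
      2 + 16 / (a - 2), -(2 + 16 / (a - 2))} : Set k) := by
  set W := (klein k).map (MulAut.conj M).toMonoidHom with hWdef
  have cW : Nat.card W = 4 := by
    rw [← card_klein h2]
    exact Nat.card_congr ((klein k).equivMapOfInjective _ (MulAut.conj M).injective).symm.toEquiv
  have hmW : ∀ v ∈ klein k, M * v * M⁻¹ ∈ W := fun v hv => ⟨v, hv, rfl⟩
  have hW : W ≤ redAut a := by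
    rintro _ ⟨v, hv, rfl⟩
    exact ⟨mul_mem (mul_mem hM (klein_le_mobGroup hv)) (inv_mem hM),
      (hc.mul (klein_le_redAut b hv).2).mul hc.inv⟩
  by_cases h8 : 8 ∣ Nat.card (redAut a)
  · obtain ⟨g, hg, hgV, hgg, hn⟩ :=
      exists_normalizing_of_dvd (redAut a) (klein k) (klein_le_redAut a) (card_klein h2) h8
    have hA := eq_of_normalizing h2 ha ha' hg hgV hgg hn
    obtain ⟨g, hg, hgV, hgg, hn⟩ := exists_normalizing_of_dvd (redAut a) W hW cW h8
    -- pull `g` back along `M` to an automorphism of `H_b` normalizing the Klein four-group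
    have hback : ∀ u, u ∈ W → M⁻¹ * u * M ∈ klein k := by
      rintro _ ⟨v, hv, rfl⟩
      simpa [mul_assoc] using hv
    have hB : b = 0 ∨ b = 6 ∨ b = -6 := by
      refine eq_of_normalizing h2 hb hb' (g := M⁻¹ * g * M)
        ⟨mul_mem (mul_mem (inv_mem hM) hg.1) hM, (hc.inv.mul hg.2).mul hc⟩ ?_ ?_ ?_
      · intro h
        apply hgV
        have := hmW _ h
        simpa [mul_assoc] using this
      · have := hback _ hgg
        simpa [mul_assoc] using this
      · intro v hv
        have := hback _ (hn _ (hmW v hv))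
        simpa [mul_assoc] using this
    have h8' := eight_ne_zero h2
    have h4 : (4 : k) ≠ 0 := by
      rw [show (4 : k) = 2 ^ 2 by norm_num]
      exact pow_ne_zero 2 h2
    have q1 : (16 : k) / 8 = 2 := by rw [div_eq_iff h8']; norm_num
    have q2 : (16 : k) / 4 = 4 := by rw [div_eq_iff h4]; norm_num
    have q3 : (16 : k) / 2 = 8 := by rw [div_eq_iff h2]; norm_num
    simp only [Set.mem_insert_iff, Set.mem_singleton_iff]
    rcases hA with rfl | rfl | rfl
    · rw [zero_add, zero_sub, div_neg, q3]
      rcases hB with rfl | rfl | rfl <;> norm_num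
    · rw [show (6 : k) + 2 = 8 by norm_num, show (6 : k) - 2 = 4 by norm_num, q1, q2]
      rcases hB with rfl | rfl | rfl <;> norm_num
    · rw [show (-6 : k) + 2 = -4 by norm_num, show (-6 : k) - 2 = -8 by norm_num, div_neg, div_neg,
        q1, q2]
      rcases hB with rfl | rfl | rfl <;> norm_num
  · obtain ⟨g, hg, hn⟩ := exists_conj_of_not_dvd (redAut a) (klein k) W (klein_le_redAut a) hW
      (card_klein h2) cW h8
    rcases normalizing_cases h2 ha ha' (fun h => hb' (by rw [h]; ring))
      (fun h => hb (by rw [h]; ring)) (mul_mem hg.1 hM) (hg.2.mul hc)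
      (fun v hv => by simpa [mul_assoc] using hn _ (hmW v hv)) with h | h | h | h | h | h <;>
      simp [h]

end Moebius

theorem stmt_16 (p : ℕ) (hp : p.Prime) (hp7 : 7 ≤ p)
    (k : Type*) [Field k] [IsAlgClosed k] [CharP k p]
    (a b : k) (ha : a ∉ ({2, -2} : Set k)) (hb : b ∉ ({2, -2} : Set k)) :
    Iso b a ↔
      b ∈ ({a, -a, 2 - 16 / (a + 2), -(2 - 16 / (a + 2)),
            2 + 16 / (a - 2), -(2 + 16 / (a - 2))} : Set k) := by
  classical
  have h2 : (2 : k) ≠ 0 := by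
    have h : ((2 : ℕ) : k) ≠ 0 := by
      rw [Ne, CharP.cast_eq_zero_iff k p]
      intro h
      have := Nat.le_of_dvd (by norm_num) h
      omega
    simpa using h
  simp only [Set.mem_insert_iff, Set.mem_singleton_iff, not_or] at ha hb
  have ha1 : a + 2 ≠ 0 := fun h => ha.2 (eq_neg_of_add_eq_zero_left h)
  have ha2 : a - 2 ≠ 0 := sub_ne_zero.2 ha.1
  constructor
  · intro h
    obtain ⟨α, β, γ, δ, lam, hdet, hlam, H⟩ := iso_iff.1 h
    exact mem_of_carries h2 ha1 ha2 (fun h => hb.2 (eq_neg_of_add_eq_zero_left h))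
      (sub_ne_zero.2 hb.1) (mob_mem α β γ δ hdet) (carries_mob hdet (pow_ne_zero 2 hlam) H)
  · exact iso_of_mem h2 ha1 ha2
end

section
/- Let b ∈ k with b ∉ {2, −2}, and let N(b) denote the cardinality of the set {a ∈ k : a ∉ {2, −2} and Iso(a,b)} of parameters a with H_a isomorphic to H_b. Then: N(b) = 6 if b ∉ {0, 6, −6} and b² ≠ −12 (the case Aut(H_b) ≅ Q₈); N(b) = 3 if b ∈ {0, 6, −6} (the case Aut(H_b) ≅ C₁₆⋊C₂); and N(b) = 2 if b² = −12 (the case Aut(H_b) ≅ SL₂(F₃)). -/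
/-!
The branch points of `H_b` are the zeros in `ℙ¹` of the binary form
`F b = x y (x⁴ - y⁴) (x⁴ + b x² y² + y⁴)`, and `Iso a b` says that an invertible linear
substitution carries `F b` to a multiple of `F a` (`iso_iff`). For every `a`, each of the pairs
`{0, ∞}`, `{1, -1}`, `{i, -i}` consists of branch points and is the fixed locus of an involution
preserving the branch locus.

If `P`, `Q` are branch points of `H_b` fixed by such an involution, then `F b (s P + t Q)` is odd
in `t`. The vanishing of its `t²`-coefficient `B` determines `Q` from `P`, and a computation shows
that, unless `b ∈ {0, 6, -6}`, the pair `{P, Q}` is one of the three above (`axis_of_involution`).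
Hence an isomorphism from `H_a` permutes the three pairs, so it is one of the 24 elements of the
octahedral group, the normaliser of the Klein four-group `{±x, ±1/x}`. Their effect on the pencil
`x⁴ + b x² y² + y⁴` is explicit (`F_octahedral`): `a` runs through the `S₃`-orbit
`±b, ±(12 - 2b)/(2 + b), ±(12 + 2b)/(2 - b)` (`orb_of_equivalent`, `equivalent_of_orb`).

The orbit `{0, 6, -6}` is then a full isomorphism class by symmetry of isomorphism, and the
remaining orbits have six elements except when `b² = -12`, where the orbit is `{b, -b}`.
-/

open Polynomial

/-! ### Binary forms and linear equivalence -/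

/-- The binary form of degree 10 attached to `f_b`; its zeros in `ℙ¹` are the branch points of
`H_b` (the point at infinity included). -/
def F {R : Type*} [CommRing R] (b x y : R) : R :=
  x * y * (x ^ 4 - y ^ 4) * (x ^ 4 + b * x ^ 2 * y ^ 2 + y ^ 4)

/-- The coefficient of `t²` in `F b (x + t u) (y + t v)`. -/
def B {R : Type*} [CommRing R] (b x y u v : R) : R :=
  (36 * x ^ 7 * y + 21 * b * x ^ 5 * y ^ 3 - 3 * b * x * y ^ 7) * u ^ 2 +
    (9 * x ^ 8 + 21 * b * x ^ 6 * y ^ 2 - 21 * b * x ^ 2 * y ^ 6 - 9 * y ^ 8) * u * v +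
    (3 * b * x ^ 7 * y - 21 * b * x ^ 3 * y ^ 5 - 36 * x * y ^ 7) * v ^ 2

/-- An invertible linear substitution carries `F b` to a nonzero multiple of `F a`. -/
def Equivalent {k : Type*} [Field k] (a b : k) : Prop :=
  ∃ α β γ δ l : k, α * δ - β * γ ≠ 0 ∧ l ≠ 0 ∧
    ∀ x y, F b (α * x + β * y) (γ * x + δ * y) = l * F a x y

/-- The six values of `a` obtained from `b` by the action of `S₃`, with denominators cleared. -/
def Orb {k : Type*} [Field k] (a b : k) : Prop :=
  a = b ∨ a = -b ∨ a * (2 + b) = 12 - 2 * b ∨ a * (2 + b) = -(12 - 2 * b) ∨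
    a * (2 - b) = 12 + 2 * b ∨ a * (2 - b) = -(12 + 2 * b)

/-- The pair of distinct points `(x : y)`, `(u : v)` is one of `{0, ∞}`, `{1, -1}`, `{i, -i}`. -/
def Axis {k : Type*} [Field k] (x y u v : k) : Prop :=
  (x * u = 0 ∧ y * v = 0) ∨ (x * v + y * u = 0 ∧ (x * u = y * v ∨ x * u = -(y * v)))

section

variable {k : Type*} [Field k]

lemma f_coeff_sum (b : k) (P Q : k[X]) :
    ∑ j ∈ Finset.range 10, C ((f b).coeff j) * P ^ j * Q ^ (10 - j) = F (C b) P Q := by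
  have hf : f b = X ^ 9 + C b * X ^ 7 - C b * X ^ 3 - X := by unfold f; ring
  rw [hf]
  simp [Finset.sum_range_succ, coeff_X, coeff_X_pow]
  unfold F; ring

lemma eval_f (a x : k) : (f a).eval x = F a x 1 := by
  unfold f F; simp

lemma eval_F (b x : k) (P Q : k[X]) : (F (C b) P Q).eval x = F b (P.eval x) (Q.eval x) := by
  unfold F; simp

lemma iso_iff_s17 [IsAlgClosed k] (a b : k) : Iso a b ↔ Equivalent a b := by
  constructor
  · rintro ⟨α, β, γ, δ, lam, hD, hl, h⟩
    refine ⟨α, β, γ, δ, lam ^ 2, hD, pow_ne_zero _ hl, fun x y => ?_⟩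
    rw [f_coeff_sum] at h
    have h1 : ∀ t, F b (α * t + β) (γ * t + δ) = lam ^ 2 * F a t 1 := by
      intro t
      have := congrArg (eval t) h
      rw [eval_F, eval_mul, eval_f] at this
      simpa using this.symm
    have h2 : ∀ y, y ≠ 0 →
        F b (α * x + β * y) (γ * x + δ * y) = lam ^ 2 * F a x y := by
      intro y hy
      have e1 : α * x + β * y = y * (α * (x / y) + β) := by field_simp
      have e2 : γ * x + δ * y = y * (γ * (x / y) + δ) := by field_simp
      have hom : ∀ c u v : k, F c (y * u) (y * v) = y ^ 10 * F c u v := by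
        intro c u v; unfold F; ring
      have e3 : F a x y = y ^ 10 * F a (x / y) 1 := by
        rw [← hom]; congr 1 <;> field_simp
      rw [e1, e2, hom, h1, e3]; ring
    -- The identity for `y ≠ 0` extends to `y = 0` since both sides are polynomials in `y`.
    have h3 : X * F (C b) (C (α * x) + C β * X) (C (γ * x) + C δ * X) =
        X * (C (lam ^ 2) * F (C a) (C x) X) := by
      refine Polynomial.funext fun t => ?_
      by_cases ht : t = 0
      · simp [ht]
      · simp only [eval_mul, eval_X, eval_C, eval_F, eval_add]
        rw [h2 t ht]
    have h4 := congrArg (eval y) (mul_left_cancel₀ X_ne_zero h3)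
    simpa only [eval_mul, eval_X, eval_C, eval_F, eval_add] using h4
  · rintro ⟨α, β, γ, δ, l, hD, hl, h⟩
    obtain ⟨lam, rfl⟩ := IsAlgClosed.exists_pow_nat_eq l (n := 2) (by norm_num)
    refine ⟨α, β, γ, δ, lam, hD, fun h0 => hl (by simp [h0]), ?_⟩
    rw [f_coeff_sum]
    refine Polynomial.funext fun t => ?_
    rw [eval_F, eval_mul, eval_f]
    simpa using (h t 1).symm

lemma Equivalent.symm {a b : k} (h : Equivalent a b) : Equivalent b a := by
  obtain ⟨α, β, γ, δ, l, hD, hl, h⟩ := h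
  refine ⟨δ, -β, -γ, α, (α * δ - β * γ) ^ 10 / l, by convert hD using 1; ring,
    div_ne_zero (pow_ne_zero _ hD) hl, fun x y => ?_⟩
  have h1 := h (δ * x + -β * y) (-γ * x + α * y)
  have h2 : F b (α * (δ * x + -β * y) + β * (-γ * x + α * y))
      (γ * (δ * x + -β * y) + δ * (-γ * x + α * y)) = (α * δ - β * γ) ^ 10 * F b x y := by
    unfold F; ring
  rw [h2] at h1
  rw [div_mul_eq_mul_div, eq_div_iff hl]
  linear_combination -h1

/-- `B` is natural under linear substitutions: it is half a second directional derivative. -/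
lemma B_map [Infinite k] (h2 : (2 : k) ≠ 0) {a b α β γ δ l : k}
    (h : ∀ x y, F b (α * x + β * y) (γ * x + δ * y) = l * F a x y) (x y u v : k) :
    B b (α * x + β * y) (γ * x + δ * y) (α * u + β * v) (γ * u + δ * v) = l * B a x y u v := by
  have key : ∀ c x y u v : k,
      (derivative (derivative (F (C c) (C x + C u * X) (C y + C v * X)))).eval 0
        = 2 * B c x y u v := by
    intro c x y u v
    unfold F B
    simp [derivative_pow]
    ring
  have hp : F (C b) (C (α * x + β * y) + C (α * u + β * v) * X)
      (C (γ * x + δ * y) + C (γ * u + δ * v) * X) =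
      C l * F (C a) (C x + C u * X) (C y + C v * X) := by
    refine Polynomial.funext fun t => ?_
    simp only [eval_mul, eval_X, eval_C, eval_F, eval_add]
    rw [← h]; congr 1 <;> ring
  have := congrArg (fun q => (derivative (derivative q)).eval 0) hp
  simp only [derivative_C_mul, eval_C_mul, key] at this
  exact mul_left_cancel₀ h2 (by linear_combination this)

/-! ### Fixed points of involutions -/

/-- If `(x : y)` is one of `0, ∞, ±1, ±i`, the vanishing of `B` forces `(u : v)` to be the other
member of its standard pair. -/
lemma axis_of_six (h2 : (2 : k) ≠ 0) (h3 : (3 : k) ≠ 0) {b x y u v : k}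
    (hb : b ≠ 2) (hb' : b ≠ -2) (hD : x * v - u * y ≠ 0)
    (h : x * y * (x ^ 4 - y ^ 4) = 0) (hB : B b x y u v = 0) : Axis x y u v := by
  have h9 : (9 : k) ≠ 0 := by
    have : (9 : k) = 3 ^ 2 := by norm_num
    rw [this]; exact pow_ne_zero _ h3
  have h18 : (18 : k) ≠ 0 := by
    have : (18 : k) = 2 * 9 := by norm_num
    rw [this]; exact mul_ne_zero h2 h9
  unfold B at hB
  by_cases hx : x = 0
  · subst hx
    have hy : y ≠ 0 := by rintro rfl; simp at hD
    have hu : u ≠ 0 := by rintro rfl; simp at hD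
    have : 9 * (y ^ 8 * u * v) = 0 := by linear_combination -hB
    simp [h9, hy, hu] at this
    left; simp [this]
  by_cases hy : y = 0
  · subst hy
    have hv : v ≠ 0 := by rintro rfl; simp at hD
    have : 9 * (x ^ 8 * u * v) = 0 := by linear_combination hB
    simp [h9, hx, hv] at this
    left; simp [this]
  have h4 : (x ^ 2 - y ^ 2) * (x ^ 2 + y ^ 2) = 0 := by
    have : x * y * (x ^ 4 - y ^ 4) = (x * y) * ((x ^ 2 - y ^ 2) * (x ^ 2 + y ^ 2)) := by ring
    rw [this] at h
    simpa [hx, hy] using h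
  -- Both cases at once: `x² = e y²` with `e = ±1`.
  have main : ∀ e : k, e ^ 2 = 1 → b + 2 * e ≠ 0 → x ^ 2 = e * y ^ 2 → x * v + y * u = 0 := by
    intro e he hbe hxy
    have h5 : 18 * (x * y ^ 5 * (b + 2 * e)) * ((x * v - u * y) * (x * v + y * u)) = 0 := by
      grind
    have h6 : x * v - u * y = 0 ∨ x * v + y * u = 0 := by
      simpa [h18, hx, hy, hbe] using h5
    exact h6.resolve_left hD
  right
  rcases mul_eq_zero.mp h4 with h4 | h4
  · have h7 := main 1 (by ring) (fun h => hb' (by linear_combination h))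
      (by linear_combination h4)
    refine ⟨h7, Or.inr (mul_left_cancel₀ hx ?_)⟩
    linear_combination u * h4 + y * h7
  · have h7 := main (-1) (by ring) (fun h => hb (by linear_combination h))
      (by linear_combination h4)
    refine ⟨h7, Or.inl (mul_left_cancel₀ hx ?_)⟩
    linear_combination u * h4 - y * h7

/-- For two zeros of `x⁴ + b x² y² + y⁴`, the coefficient `B` does not vanish unless
`b ∈ {0, 6, -6}`. -/
lemma not_four (h2 : (2 : k) ≠ 0) (h3 : (3 : k) ≠ 0) {b x y u v : k}
    (hb : b ≠ 2) (hb' : b ≠ -2) (b0 : b ≠ 0) (b6 : b ≠ 6) (b6' : b ≠ -6)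
    (hD : x * v - u * y ≠ 0) (h6 : x * y * (x ^ 4 - y ^ 4) ≠ 0)
    (hP : x ^ 4 + b * x ^ 2 * y ^ 2 + y ^ 4 = 0) (hQ : u ^ 4 + b * u ^ 2 * v ^ 2 + v ^ 4 = 0)
    (hB : B b x y u v = 0) : False := by
  have hx : x ≠ 0 := by rintro rfl; simp at h6
  have hy : y ≠ 0 := by rintro rfl; simp at h6
  have h4 : x ^ 4 - y ^ 4 ≠ 0 := right_ne_zero_of_mul h6
  have e1 : ((x * u - y * v) * (x * u + y * v)) * ((x * v - u * y) * (x * v + u * y)) = 0 := by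
    linear_combination u ^ 2 * v ^ 2 * hP - x ^ 2 * y ^ 2 * hQ
  have h24 : (24 : k) ≠ 0 := by
    have : (24 : k) = 2 ^ 3 * 3 := by norm_num
    rw [this]; exact mul_ne_zero (pow_ne_zero _ h2) h3
  -- The case `(u : v) = (e y : x)`, where `e = ±1`.
  have swap : ∀ e s : k, e ^ 2 = 1 → b ≠ 6 * e → b + 2 * e ≠ 0 → v = s * x → u = s * (e * y) →
      False := by
    rintro e s he h1 h1' rfl rfl
    have hs : s ≠ 0 := by rintro rfl; simp at hD
    have : 3 * (s ^ 2 * x ^ 3 * y ^ 3 * (x ^ 4 - y ^ 4) * ((b - 6 * e) * (b + 2 * e))) = 0 := by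
      unfold B at hB
      linear_combination -hB + s ^ 2 * x * y * (x ^ 4 - y ^ 4) * (9 * e + 3 * b) * hP +
        s ^ 2 * (36 * x ^ 7 * y ^ 3 + 21 * b * x ^ 5 * y ^ 5 - 3 * b * x * y ^ 9
          - 36 * x ^ 3 * y ^ 3 * (x ^ 4 - y ^ 4)) * he
    simp [h3, hs, hx, hy, h4, sub_eq_zero, h1, h1'] at this
  rcases mul_eq_zero.mp e1 with h | h
  · rcases mul_eq_zero.mp h with h | h
    · exact swap 1 (v / x) (by ring) (by simpa using b6) (fun h => hb' (by linear_combination h))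
        (by field_simp) (by field_simp; linear_combination h)
    · exact swap (-1) (v / x) (by ring) (by simpa using b6')
        (fun h => hb (by linear_combination h)) (by field_simp)
        (by field_simp; linear_combination h)
  · have h := (mul_eq_zero.mp h).resolve_left hD
    obtain ⟨s, rfl⟩ : ∃ s, v = s * y := ⟨v / y, by field_simp⟩
    obtain rfl : u = -(s * x) := mul_right_cancel₀ hy (by linear_combination h)
    have hs : s ≠ 0 := by rintro rfl; simp at hD
    have : 24 * (b * s ^ 2 * x ^ 3 * y ^ 3 * (x ^ 4 - y ^ 4)) = 0 := by
      unfold B at hB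
      linear_combination -hB + 27 * s ^ 2 * x * y * (x ^ 4 - y ^ 4) * hP
    simp [h24, b0, hs, hx, hy, h4] at this

/-- The involution with fixed points `P = (x : y)` and `Q = (u : v)`, both branch points, can
preserve the branch locus only if `{P, Q}` is one of the three standard pairs. Invariance is used
only through the vanishing of two coefficients of `F b (s P + t Q)`. -/
lemma axis_of_involution (h2 : (2 : k) ≠ 0) (h3 : (3 : k) ≠ 0) {b x y u v : k}
    (hb : b ≠ 2) (hb' : b ≠ -2) (b0 : b ≠ 0) (b6 : b ≠ 6) (b6' : b ≠ -6)
    (hD : x * v - u * y ≠ 0) (hP : F b x y = 0) (hQ : F b u v = 0)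
    (hB : B b x y u v = 0) (hB' : B b u v x y = 0) : Axis x y u v := by
  by_cases h : x * y * (x ^ 4 - y ^ 4) = 0
  · exact axis_of_six h2 h3 hb hb' hD h hB
  by_cases h' : u * v * (u ^ 4 - v ^ 4) = 0
  · have := axis_of_six h2 h3 hb hb' (fun h0 => hD (by linear_combination -h0)) h' hB'
    unfold Axis at this ⊢
    rcases this with ⟨h1, h2⟩ | ⟨h1, h2⟩
    · exact Or.inl ⟨by linear_combination h1, by linear_combination h2⟩
    · refine Or.inr ⟨by linear_combination h1, h2.imp (fun h => ?_) (fun h => ?_)⟩ <;>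
        linear_combination h
  exact (not_four h2 h3 hb hb' b0 b6 b6' hD h ((mul_eq_zero.mp hP).resolve_left h)
    ((mul_eq_zero.mp hQ).resolve_left h') hB).elim

/-! ### Octahedral substitutions -/

/-- The sixteen octahedral substitutions mapping `{0, ∞}` to another standard pair are, up to
scalars, those with matrix `[1, z; w, -z w]`, `z⁴ = w⁴ = 1`; this is their effect on `F b`. -/
lemma F_octahedral (b z w x y e e' : k) (hz : z ^ 2 = e) (he : e ^ 2 = 1) (hw : w ^ 2 = e')
    (he' : e' ^ 2 = 1) :
    F b (x + z * y) (w * x + -(z * w) * y) = 8 * w * z * (x * y * (x ^ 4 - y ^ 4) *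
      ((2 + b * e') * (x ^ 4 + y ^ 4) + e * (12 - 2 * b * e') * x ^ 2 * y ^ 2)) := by
  have hz4 : z ^ 4 = 1 := by rw [← he, ← hz]; ring
  have hw4 : w ^ 4 = 1 := by rw [← he', ← hw]; ring
  have a1 : (w * x + -(z * w) * y) ^ 4 = (x - z * y) ^ 4 := by
    linear_combination (x - z * y) ^ 4 * hw4
  have a2 : (w * x + -(z * w) * y) ^ 2 = e' * (x - z * y) ^ 2 := by
    linear_combination (x - z * y) ^ 2 * hw
  have s1 : (x + z * y) * (w * x + -(z * w) * y) * ((x + z * y) ^ 4 - (x - z * y) ^ 4) =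
      8 * w * z * (x * y * (x ^ 4 - y ^ 4)) := by
    linear_combination -8 * w * z * x * y ^ 5 * hz4
  have s2 : (x + z * y) ^ 4 + b * (x + z * y) ^ 2 * (e' * (x - z * y) ^ 2) + (x - z * y) ^ 4 =
      (2 + b * e') * (x ^ 4 + y ^ 4) + e * (12 - 2 * b * e') * x ^ 2 * y ^ 2 := by
    linear_combination (2 + b * e') * y ^ 4 * hz4 + (12 - 2 * b * e') * x ^ 2 * y ^ 2 * hz
  unfold F
  rw [a1, a2, s1, s2]; ring

/-- Comparison of coefficients of two proportional members of the pencil. -/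
lemma coeff_compare [IsAlgClosed k] (h2 : (2 : k) ≠ 0) (h3 : (3 : k) ≠ 0) (h5 : (5 : k) ≠ 0)
    {K s t l a : k}
    (h : ∀ x y : k, K * (x * y * (x ^ 4 - y ^ 4) * (s * (x ^ 4 + y ^ 4) + t * x ^ 2 * y ^ 2)) =
      l * F a x y) : K * s = l ∧ K * t = l * a := by
  obtain ⟨i, hi⟩ := IsAlgClosed.exists_pow_nat_eq (-1 : k) (n := 4) (by norm_num)
  obtain ⟨r, hr⟩ := IsAlgClosed.exists_pow_nat_eq (2 : k) (n := 2) (by norm_num)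
  have hi0 : i ≠ 0 := by rintro rfl; simp at hi
  have hr0 : r ≠ 0 := by rintro rfl; simp at hr; exact h2 hr.symm
  have hr4 : r ^ 4 = 4 := by linear_combination (r ^ 2 + 2) * hr
  -- At `x⁴ = -1` the factor `x⁴ + 1` vanishes; `x² = 2` then isolates the other coefficient.
  have e1 := h i 1
  have e2 := h r 1
  unfold F at e1 e2
  have c2 : K * t = l * a := by
    have : 2 * i ^ 3 * (K * t - l * a) = 0 := by
      grind
    have := (mul_eq_zero.mp this).resolve_left (mul_ne_zero h2 (pow_ne_zero _ hi0))
    linear_combination this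
  refine ⟨?_, c2⟩
  have : 3 * 5 * r * (K * s - l) = 0 := by
    grind
  have := (mul_eq_zero.mp this).resolve_left (mul_ne_zero (mul_ne_zero h3 h5) hr0)
  linear_combination this

lemma orb_of_ratio {K l a s t : k} (hl : l ≠ 0) (h : K * s = l ∧ K * t = l * a) :
    a * s = t := by
  have hK : K ≠ 0 := by rintro rfl; exact hl (by linear_combination -h.1)
  apply mul_left_cancel₀ hK
  linear_combination a * h.1 - h.2

/-- If `b ∉ {0, 6, -6}`, an isomorphism permutes the three standard pairs, hence
is one of the 24 octahedral substitutions. -/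
lemma orb_of_equivalent [IsAlgClosed k] (h2 : (2 : k) ≠ 0) (h3 : (3 : k) ≠ 0) (h5 : (5 : k) ≠ 0)
    {a b : k} (hb : b ≠ 2) (hb' : b ≠ -2) (b0 : b ≠ 0) (b6 : b ≠ 6) (b6' : b ≠ -6)
    (h : Equivalent a b) : Orb a b := by
  obtain ⟨α, β, γ, δ, l, hD, hl, h⟩ := h
  have hB := B_map h2 h
  have R1 : Axis α γ β δ := by
    refine axis_of_involution h2 h3 hb hb' b0 b6 b6' hD ?_ ?_ ?_ ?_
    · simpa [F] using h 1 0
    · simpa [F] using h 0 1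
    · simpa [B] using hB 1 0 0 1
    · simpa [B] using hB 0 1 1 0
  have R2 : Axis (α + β) (γ + δ) (α - β) (γ - δ) := by
    refine axis_of_involution h2 h3 hb hb' b0 b6 b6' ?_ ?_ ?_ ?_ ?_
    · intro h0
      exact mul_ne_zero h2 hD (by linear_combination -h0)
    · simpa [F] using h 1 1
    · have := h 1 (-1)
      simp only [mul_one, mul_neg, ← sub_eq_add_neg] at this
      rw [this]; unfold F; ring
    · have := hB 1 1 1 (-1)
      simp only [mul_one, mul_neg, ← sub_eq_add_neg] at this
      rw [this]; unfold B; ring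
    · have := hB 1 (-1) 1 1
      simp only [mul_one, mul_neg, ← sub_eq_add_neg] at this
      rw [this]; unfold B; ring
  unfold Axis at R1 R2
  have mono : ∀ K e : k, (e = 1 ∨ e = -1) → (∀ x y, K * (x * y * (x ^ 4 - y ^ 4) *
      (1 * (x ^ 4 + y ^ 4) + (e * b) * x ^ 2 * y ^ 2)) = l * F a x y) → Orb a b := by
    intro K e he hK
    have := orb_of_ratio hl (coeff_compare h2 h3 h5 hK)
    rcases he with rfl | rfl
    · left; linear_combination this
    · right; left; linear_combination this
  rcases R1 with ⟨h1, h1'⟩ | ⟨h1, h1'⟩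
  · by_cases hα : α = 0
    · subst hα
      have hβ : β ≠ 0 := by rintro rfl; simp at hD
      have hγ : γ ≠ 0 := by rintro rfl; simp at hD
      obtain rfl : δ = 0 := by simpa [hγ] using h1'
      obtain ⟨e, he, hγβ⟩ : ∃ e : k, (e = 1 ∨ e = -1) ∧ γ ^ 2 = e * β ^ 2 := by
        rcases R2 with ⟨h, -⟩ | ⟨-, h | h⟩
        · simp [hβ] at h
        · exact ⟨-1, by simp, by linear_combination -h⟩
        · exact ⟨1, by simp, by linear_combination h⟩
      have he2 : e ^ 2 = 1 := by rcases he with rfl | rfl <;> ring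
      have h4 : γ ^ 4 = β ^ 4 := by
        linear_combination (γ ^ 2 + e * β ^ 2) * hγβ + β ^ 4 * he2
      refine mono (-(β * γ * β ^ 8)) e he fun x y => ?_
      rw [← h]; unfold F
      have q1 : (γ * x + 0 * y) ^ 4 = β ^ 4 * x ^ 4 := by linear_combination x ^ 4 * h4
      have q2 : (γ * x + 0 * y) ^ 2 = e * β ^ 2 * x ^ 2 := by linear_combination x ^ 2 * hγβ
      rw [q1, q2]; ring
    · obtain rfl : β = 0 := by simpa [hα] using h1
      have hδ : δ ≠ 0 := by rintro rfl; simp at hD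
      obtain rfl : γ = 0 := by simpa [hδ] using h1'
      obtain ⟨e, he, hδα⟩ : ∃ e : k, (e = 1 ∨ e = -1) ∧ δ ^ 2 = e * α ^ 2 := by
        rcases R2 with ⟨h, -⟩ | ⟨-, h | h⟩
        · simp [hα] at h
        · exact ⟨-1, by simp, by linear_combination h⟩
        · exact ⟨1, by simp, by linear_combination -h⟩
      have he2 : e ^ 2 = 1 := by rcases he with rfl | rfl <;> ring
      have h4 : δ ^ 4 = α ^ 4 := by
        linear_combination (δ ^ 2 + e * α ^ 2) * hδα + α ^ 4 * he2
      refine mono (α * δ * α ^ 8) e he fun x y => ?_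
      rw [← h]; unfold F
      have q1 : (0 * x + δ * y) ^ 4 = α ^ 4 * y ^ 4 := by linear_combination y ^ 4 * h4
      have q2 : (0 * x + δ * y) ^ 2 = e * α ^ 2 * y ^ 2 := by linear_combination y ^ 2 * hδα
      rw [q1, q2]; ring
  · have hα : α ≠ 0 := by
      rintro rfl
      exact hD (by linear_combination -h1)
    have hβ : β ≠ 0 := by
      rintro rfl
      exact hD (by linear_combination h1)
    have hγ : γ ≠ 0 := by
      rintro rfl
      exact hD (by linear_combination h1)
    have hδ : δ ≠ 0 := by
      rintro rfl
      exact hD (by linear_combination -h1)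
    obtain ⟨e', he', hw⟩ : ∃ e : k, (e = 1 ∨ e = -1) ∧ γ ^ 2 = e * α ^ 2 := by
      rcases h1' with h | h
      · exact ⟨-1, by simp, mul_left_cancel₀ hβ (by linear_combination α * h + γ * h1)⟩
      · exact ⟨1, by simp, mul_left_cancel₀ hβ (by linear_combination γ * h1 - α * h)⟩
    obtain ⟨e, he, hz⟩ : ∃ e : k, (e = 1 ∨ e = -1) ∧ β ^ 2 = e * α ^ 2 := by
      rcases R2 with ⟨h, -⟩ | ⟨h, -⟩
      · exact ⟨1, by simp, by linear_combination -h⟩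
      · refine ⟨-1, by simp, mul_left_cancel₀ (mul_ne_zero h2 (mul_ne_zero hγ hδ)) ?_⟩
        linear_combination α * δ * h + 2 * β * δ * h1
    obtain ⟨z, rfl⟩ : ∃ z, β = α * z := ⟨β / α, by field_simp⟩
    obtain ⟨w, rfl⟩ : ∃ w, γ = α * w := ⟨γ / α, by field_simp⟩
    obtain rfl : δ = α * -(z * w) := mul_left_cancel₀ hα (by linear_combination h1)
    have hα2 : α ^ 2 ≠ 0 := pow_ne_zero _ hα
    have hz : z ^ 2 = e := mul_left_cancel₀ hα2 (by linear_combination hz)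
    have hw : w ^ 2 = e' := mul_left_cancel₀ hα2 (by linear_combination hw)
    have he2 : e ^ 2 = 1 := by rcases he with rfl | rfl <;> ring
    have he2' : e' ^ 2 = 1 := by rcases he' with rfl | rfl <;> ring
    have key : a * (2 + b * e') = e * (12 - 2 * b * e') := by
      refine orb_of_ratio hl (coeff_compare (K := α ^ 10 * (8 * w * z)) h2 h3 h5 fun x y => ?_)
      rw [← h, mul_assoc, ← F_octahedral b z w x y e e' hz he2 hw he2']
      unfold F; ring
    unfold Orb
    rcases he with rfl | rfl <;> rcases he' with rfl | rfl
    · right; right; left; linear_combination key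
    · right; right; right; right; left; linear_combination key
    · right; right; right; left; linear_combination key
    · right; right; right; right; right; linear_combination key

lemma equivalent_of_orb [IsAlgClosed k] (h2 : (2 : k) ≠ 0)
    {a b : k} (hb : b ≠ 2) (hb' : b ≠ -2) (h : Orb a b) : Equivalent a b := by
  have key : ∀ e e' : k, e ^ 2 = 1 → e' ^ 2 = 1 → 2 + b * e' ≠ 0 →
      a * (2 + b * e') = e * (12 - 2 * b * e') → Equivalent a b := by
    intro e e' he he' h0 ha
    obtain ⟨z, hz⟩ := IsAlgClosed.exists_pow_nat_eq e (n := 2) (by norm_num)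
    obtain ⟨w, hw⟩ := IsAlgClosed.exists_pow_nat_eq e' (n := 2) (by norm_num)
    have hz0 : z ≠ 0 := by rintro rfl; subst hz; simp at he
    have hw0 : w ≠ 0 := by rintro rfl; subst hw; simp at he'
    have h8 : (8 : k) ≠ 0 := by
      have : (8 : k) = 2 ^ 3 := by norm_num
      rw [this]; exact pow_ne_zero _ h2
    refine ⟨1, z, w, -(z * w), 8 * w * z * (2 + b * e'), fun h => ?_, ?_, fun x y => ?_⟩
    · exact mul_ne_zero h2 (mul_ne_zero hz0 hw0) (by linear_combination -h)
    · exact mul_ne_zero (mul_ne_zero (mul_ne_zero h8 hw0) hz0) h0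
    · rw [one_mul, F_octahedral b z w x y e e' hz he hw he', ← ha]
      unfold F; ring
  have n1 : 2 + b * 1 ≠ 0 := fun h => hb' (by linear_combination h)
  have n2 : 2 + b * -1 ≠ 0 := fun h => hb (by linear_combination -h)
  rcases h with rfl | rfl | h | h | h | h
  · exact ⟨1, 0, 0, 1, 1, by simp, by simp, fun x y => by simp⟩
  · obtain ⟨i, hi⟩ := IsAlgClosed.exists_pow_nat_eq (-1 : k) (n := 2) (by norm_num)
    have hi0 : i ≠ 0 := by rintro rfl; simp at hi
    refine ⟨i, 0, 0, 1, i, by simpa using hi0, hi0, fun x y => ?_⟩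
    have hi4 : i ^ 4 = 1 := by linear_combination (i ^ 2 - 1) * hi
    have q1 : (i * x + 0 * y) ^ 4 = x ^ 4 := by linear_combination x ^ 4 * hi4
    have q2 : (i * x + 0 * y) ^ 2 = -x ^ 2 := by linear_combination x ^ 2 * hi
    unfold F; rw [q1, q2]; ring
  · exact key 1 1 (by ring) (by ring) n1 (by linear_combination h)
  · exact key (-1) 1 (by ring) (by ring) n1 (by linear_combination h)
  · exact key 1 (-1) (by ring) (by ring) n2 (by linear_combination h)
  · exact key (-1) (-1) (by ring) (by ring) n2 (by linear_combination h)

end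

/-! ### Counting -/

theorem stmt_17 (p : ℕ) (hp : p.Prime) (hp7 : 7 ≤ p)
    (k : Type*) [Field k] [IsAlgClosed k] [CharP k p]
    (b : k) (hb : b ∉ ({2, -2} : Set k)) :
    (b ∉ ({0, 6, -6} : Set k) → b ^ 2 ≠ -12 →
      Set.ncard {a : k | a ∉ ({2, -2} : Set k) ∧ Iso a b} = 6) ∧
    (b ∈ ({0, 6, -6} : Set k) →
      Set.ncard {a : k | a ∉ ({2, -2} : Set k) ∧ Iso a b} = 3) ∧
    (b ^ 2 = -12 →
      Set.ncard {a : k | a ∉ ({2, -2} : Set k) ∧ Iso a b} = 2) := by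
  classical
  have hsmall : ∀ n : ℕ, 0 < n → n < 7 → (n : k) ≠ 0 := by
    intro n hn hn7 h
    have := Nat.le_of_dvd hn ((CharP.cast_eq_zero_iff k p n).mp h)
    omega
  have h2 : (2 : k) ≠ 0 := by exact_mod_cast hsmall 2 (by norm_num) (by norm_num)
  have h3 : (3 : k) ≠ 0 := by exact_mod_cast hsmall 3 (by norm_num) (by norm_num)
  have h5 : (5 : k) ≠ 0 := by exact_mod_cast hsmall 5 (by norm_num) (by norm_num)
  have h23 : ∀ i j : ℕ, (2 : k) ^ i * 3 ^ j ≠ 0 := fun i j =>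
    mul_ne_zero (pow_ne_zero _ h2) (pow_ne_zero _ h3)
  have h4 : (4 : k) ≠ 0 := by convert h23 2 0 using 1; norm_num
  have h6 : (6 : k) ≠ 0 := by convert h23 1 1 using 1; norm_num
  have h8 : (8 : k) ≠ 0 := by convert h23 3 0 using 1; norm_num
  have h12 : (12 : k) ≠ 0 := by convert h23 2 1 using 1; norm_num
  have h16 : (16 : k) ≠ 0 := by convert h23 4 0 using 1; norm_num
  have h48 : (48 : k) ≠ 0 := by convert h23 4 1 using 1; norm_num
  obtain ⟨hb2, hb2'⟩ : b ≠ 2 ∧ b ≠ -2 := by simpa using hb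
  have n1 : 2 + b ≠ 0 := fun h => hb2' (by linear_combination h)
  have n2 : 2 - b ≠ 0 := fun h => hb2 (by linear_combination -h)
  -- Outside `{0, 6, -6}` the isomorphism class is the `S₃`-orbit.
  have hset : b ∉ ({0, 6, -6} : Set k) →
      {a : k | a ∉ ({2, -2} : Set k) ∧ Iso a b} = {a | Orb a b} := by
    intro h0
    obtain ⟨b0, b6, b6'⟩ : b ≠ 0 ∧ b ≠ 6 ∧ b ≠ -6 := by simpa using h0
    ext a
    simp only [Set.mem_ofPred_eq, iso_iff_s17]
    refine ⟨fun h => orb_of_equivalent h2 h3 h5 hb2 hb2' b0 b6 b6' h.2, fun h =>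
      ⟨?_, equivalent_of_orb h2 hb2 hb2' h⟩⟩
    simp only [Set.mem_insert_iff, Set.mem_singleton_iff]
    unfold Orb at h
    have h24 : ∀ t : k, 4 * t = 0 → t = 0 := fun t ht => (mul_eq_zero.mp ht).resolve_left h4
    rintro (rfl | rfl) <;> rcases h with h | h | h | h | h | h
    · exact hb2 h.symm
    · exact hb2' (by linear_combination h)
    · exact hb2 (sub_eq_zero.mp (h24 _ (by linear_combination h)))
    · exact h16 (by linear_combination h)
    · exact n1 (h24 _ (by linear_combination -h))
    · exact h16 (by linear_combination h)
    · exact hb2' h.symm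
    · exact hb2 (by linear_combination h)
    · exact h16 (by linear_combination -h)
    · exact n2 (h24 _ (by linear_combination h))
    · exact h16 (by linear_combination -h)
    · exact n1 (h24 _ (by linear_combination h))
  refine ⟨fun h0 h12' => ?_, fun h0 => ?_, fun hb12 => ?_⟩
  · rw [hset h0]
    obtain ⟨b0, b6, b6'⟩ : b ≠ 0 ∧ b ≠ 6 ∧ b ≠ -6 := by simpa using h0
    obtain ⟨c, hc⟩ : ∃ c, c = (12 - 2 * b) / (2 + b) := ⟨_, rfl⟩
    obtain ⟨d, hd⟩ : ∃ d, d = (12 + 2 * b) / (2 - b) := ⟨_, rfl⟩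
    have hc' : c * (2 + b) = 12 - 2 * b := by rw [hc]; field_simp
    have hd' : d * (2 - b) = 12 + 2 * b := by rw [hd]; field_simp
    have hO : {a | Orb a b} = (({b, -b, c, -c, d, -d} : Finset k) : Set k) := by
      ext a
      simp only [Orb, Set.mem_ofPred_eq, Finset.coe_insert, Finset.coe_singleton,
        Set.mem_insert_iff, Set.mem_singleton_iff]
      rw [hc, hd, ← neg_div, ← neg_div, eq_div_iff n1, eq_div_iff n1, eq_div_iff n2,
        eq_div_iff n2]
    have q : b ^ 2 + 12 ≠ 0 := fun h => h12' (by linear_combination h)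
    have hbc : b ≠ c := fun h => mul_ne_zero (sub_ne_zero.mpr b6') (sub_ne_zero.mpr hb2)
      (by rw [← h] at hc'; linear_combination hc')
    have hbc' : b ≠ -c := fun h => q (by linear_combination (2 + b) * h - hc')
    have hbd : b ≠ d := fun h => q (by linear_combination -(2 - b) * h - hd')
    have hbd' : b ≠ -d := fun h => mul_ne_zero (sub_ne_zero.mpr b6) (sub_ne_zero.mpr hb2')
      (by linear_combination -(2 - b) * h + hd')
    have hcd : c ≠ d := fun h => mul_ne_zero (mul_ne_zero h8 h4) b0
      (by linear_combination (2 - b) * hc' - (2 + b) * hd' - (2 + b) * (2 - b) * h)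
    have hcd' : c ≠ -d := fun h => mul_ne_zero h4 q
      (by linear_combination (2 + b) * (2 - b) * h - (2 - b) * hc' - (2 + b) * hd')
    have c0 : c ≠ 0 := fun h => mul_ne_zero h2 (sub_ne_zero.mpr b6)
      (by rw [h] at hc'; linear_combination hc')
    have d0 : d ≠ 0 := fun h => mul_ne_zero h2 (sub_ne_zero.mpr b6')
      (by rw [h] at hd'; linear_combination -hd')
    have hneg : ∀ t : k, t ≠ 0 → t ≠ -t := fun t ht h =>
      mul_ne_zero h2 ht (by linear_combination h)
    rw [hO, Set.ncard_coe_finset]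
    simp [Finset.card_insert_of_notMem, neg_eq_iff_eq_neg, hbc, hbc', hbd, hbd', hcd, hcd',
      hneg b b0, hneg c c0, hneg d d0]
  · have hS : {a : k | a ∉ ({2, -2} : Set k) ∧ Iso a b} =
        (({0, 6, -6} : Finset k) : Set k) := by
      ext a
      simp only [Set.mem_ofPred_eq, Finset.coe_insert, Finset.coe_singleton, iso_iff_s17]
      have hb0 : b = 0 ∨ b = 6 ∨ b = -6 := by simpa using h0
      constructor
      · rintro ⟨ha, h⟩
        by_contra ha0
        obtain ⟨a2, a2'⟩ : a ≠ 2 ∧ a ≠ -2 := by simpa using ha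
        obtain ⟨a0, a6, a6'⟩ : a ≠ 0 ∧ a ≠ 6 ∧ a ≠ -6 := by simpa using ha0
        -- The orbit of `a` would contain `b`, but `{0, 6, -6}` is itself an orbit.
        have ho := orb_of_equivalent h2 h3 h5 a2 a2' a0 a6 a6' h.symm
        unfold Orb at ho
        have k2 : ∀ t : k, 2 * t = 0 → t = 0 := fun t ht => (mul_eq_zero.mp ht).resolve_left h2
        have k4 : ∀ t : k, 4 * t = 0 → t = 0 := fun t ht => (mul_eq_zero.mp ht).resolve_left h4
        have k8 : ∀ t : k, 8 * t = 0 → t = 0 := fun t ht => (mul_eq_zero.mp ht).resolve_left h8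
        rcases hb0 with rfl | rfl | rfl <;> rcases ho with ho | ho | ho | ho | ho | ho
        · exact a0 ho.symm
        · exact a0 (by linear_combination ho)
        · exact a6 (sub_eq_zero.mp (k2 _ (by linear_combination ho)))
        · exact a6 (sub_eq_zero.mp (k2 _ (by linear_combination -ho)))
        · exact a6' (sub_eq_zero.mp (k2 _ (by linear_combination -ho)))
        · exact a6' (sub_eq_zero.mp (k2 _ (by linear_combination ho)))
        · exact a6 ho.symm
        · exact a6' (by linear_combination ho)
        · exact a0 (k8 _ (by linear_combination ho))
        · exact a6' (sub_eq_zero.mp (k4 _ (by linear_combination ho)))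
        · exact a0 (k8 _ (by linear_combination -ho))
        · exact a6 (sub_eq_zero.mp (k4 _ (by linear_combination -ho)))
        · exact a6' ho.symm
        · exact a6 (by linear_combination ho)
        · exact a6' (sub_eq_zero.mp (k4 _ (by linear_combination -ho)))
        · exact a0 (k8 _ (by linear_combination -ho))
        · exact a6 (sub_eq_zero.mp (k4 _ (by linear_combination ho)))
        · exact a0 (k8 _ (by linear_combination ho))
      · intro ha
        have ha0 : a = 0 ∨ a = 6 ∨ a = -6 := by simpa using ha
        refine ⟨?_, equivalent_of_orb h2 hb2 hb2' ?_⟩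
        · simp only [Set.mem_insert_iff, Set.mem_singleton_iff]
          rintro (h | h) <;> rcases ha0 with rfl | rfl | rfl
          · exact h2 h.symm
          · exact h4 (by linear_combination h)
          · exact h8 (by linear_combination -h)
          · exact h2 (by linear_combination h)
          · exact h8 (by linear_combination h)
          · exact h4 (by linear_combination -h)
        · unfold Orb
          rcases hb0 with rfl | rfl | rfl <;> rcases ha0 with rfl | rfl | rfl <;> norm_num
    have e1 : (6 : k) ≠ -6 := fun h => h12 (by linear_combination h)
    rw [hS, Set.ncard_coe_finset]
    simp [Finset.card_insert_of_notMem, h6, h6.symm, e1]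
  · have b0 : b ≠ 0 := by rintro rfl; exact h12 (by linear_combination hb12)
    have b6 : b ≠ 6 := by rintro rfl; exact h48 (by linear_combination hb12)
    have b6' : b ≠ -6 := by rintro rfl; exact h48 (by linear_combination hb12)
    have hbb : b ≠ -b := fun h => mul_ne_zero h2 b0 (by linear_combination h)
    rw [hset (by simp [b0, b6, b6']), ← Set.ncard_pair hbb]
    congr 1
    ext a
    simp only [Orb, Set.mem_ofPred_eq, Set.mem_insert_iff, Set.mem_singleton_iff]
    refine ⟨?_, fun h => h.elim Or.inl fun h => Or.inr (Or.inl h)⟩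
    rintro (h | h | h | h | h | h)
    · exact Or.inl h
    · exact Or.inr h
    · exact Or.inr (mul_right_cancel₀ n1 (by linear_combination h + hb12))
    · exact Or.inl (mul_right_cancel₀ n1 (by linear_combination h - hb12))
    · exact Or.inl (mul_right_cancel₀ n2 (by linear_combination h + hb12))
    · exact Or.inr (mul_right_cancel₀ n2 (by linear_combination h - hb12))
end
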